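/- Suppose k_max < 0 and ∫₀^{Φ_F} 1/K(φ) dφ > 1, and suppose the initial datum Q_init satisfies Assumption (A2) and H_init(η) := Q_init'(η) − K(Q_init(η)) > 0 for all η ∈ [0,1]. Then there exists a unique global classical solution (Q,N) of the Q-system on [0,∞), a unique steady state (Q*, N*) exists, and for all τ ≥ 0: ‖∂_ηQ(τ,·) − (Q*)'‖_{L¹(0,1)} ≤ e^{k_max·τ} · ‖∂_ηQ(0,·) − (Q*)'‖_{L¹(0,1)}. -/

import Mathlib

open Real Set MeasureTheory Filter Topology
open scoped ENNReal

noncomputable section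

/-- The time interval `[0, T)` in `ℝ`, where `T : ℝ≥0∞` may be `∞`. -/
def Ico0 (T : ℝ≥0∞) : Set ℝ := {τ : ℝ | 0 ≤ τ ∧ ENNReal.ofReal τ < T}

/-- Partial derivative in the time variable (one-sided at `τ = 0`). -/
def pdTau (Q : ℝ → ℝ → ℝ) (τ η : ℝ) : ℝ := derivWithin (fun s => Q s η) (Ici 0) τ

/-- Partial derivative in the spatial variable (one-sided at `η = 0` and `η = 1`). -/
def pdEta (Q : ℝ → ℝ → ℝ) (τ η : ℝ) : ℝ := derivWithin (fun x => Q τ x) (Icc 0 1) η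

/-- Assumption 1.1: `K ∈ C²(ℝ)` with `K'`, `K''` bounded on `ℝ` and `K > 0` on `[0, Φ_F]`. -/
structure KAssump (K : ℝ → ℝ) (ΦF : ℝ) : Prop where
  smooth : ContDiff ℝ 2 K
  bdd1 : ∃ C : ℝ, ∀ x : ℝ, |deriv K x| ≤ C
  bdd2 : ∃ C : ℝ, ∀ x : ℝ, |deriv (deriv K) x| ≤ C
  pos : ∀ φ ∈ Icc (0 : ℝ) ΦF, 0 < K φ

/-- `k_min := K'(0) + ∫₀^{Φ_F} min(K''(φ), 0) dφ`. -/
def kmin (K : ℝ → ℝ) (ΦF : ℝ) : ℝ :=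
  deriv K 0 + ∫ φ in (0 : ℝ)..ΦF, min (deriv (deriv K) φ) 0

/-- `k_max := K'(0) + ∫₀^{Φ_F} max(K''(φ), 0) dφ`. -/
def kmax (K : ℝ → ℝ) (ΦF : ℝ) : ℝ :=
  deriv K 0 + ∫ φ in (0 : ℝ)..ΦF, max (deriv (deriv K) φ) 0

/-- Assumption (A2) on the initial datum. -/
structure A2 (K : ℝ → ℝ) (ΦF : ℝ) (Qinit : ℝ → ℝ) : Prop where
  reg : ContDiffOn ℝ 1 Qinit (Icc 0 1)
  mono : MonotoneOn Qinit (Icc 0 1)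
  init0 : Qinit 0 = 0
  init1 : Qinit 1 = ΦF
  deriv1 : K ΦF < derivWithin Qinit (Icc 0 1) 1
  compat : derivWithin Qinit (Icc 0 1) 1 - derivWithin Qinit (Icc 0 1) 0 = K ΦF - K 0

/-- A classical solution `(Q, N)` of the Q-system on `[0, T)` with initial datum `Qinit`. -/
structure IsQSol (K : ℝ → ℝ) (ΦF : ℝ) (T : ℝ≥0∞) (Qinit : ℝ → ℝ)
    (Q : ℝ → ℝ → ℝ) (N : ℝ → ℝ) : Prop where
  initReg : ContDiffOn ℝ 1 Qinit (Icc 0 1)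
  initMono : MonotoneOn Qinit (Icc 0 1)
  init0 : Qinit 0 = 0
  init1 : Qinit 1 = ΦF
  initDeriv : K ΦF < derivWithin Qinit (Icc 0 1) 1
  reg : ContDiffOn ℝ 1 (Function.uncurry Q) (Ico0 T ×ˢ Icc (0 : ℝ) 1)
  mono : ∀ τ ∈ Ico0 T, MonotoneOn (Q τ) (Icc 0 1)
  Ncont : ContinuousOn N (Ico0 T)
  Npos : ∀ τ ∈ Ico0 T, 0 < N τ
  pde : ∀ τ ∈ Ico0 T, ∀ η ∈ Ioo (0 : ℝ) 1,
    pdTau Q τ η + pdEta Q τ η = 1 / N τ + K (Q τ η)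
  bc : ∀ τ ∈ Ico0 T, Q τ 0 = 0
  Ndef : ∀ τ ∈ Ico0 T, 1 / N τ = pdEta Q τ 1 - K ΦF
  init : ∀ η ∈ Icc (0 : ℝ) 1, Q 0 η = Qinit η
  constraint : ∀ τ ∈ Ico0 T, K ΦF < pdEta Q τ 1

/-- A classical solution `(Q, Ñ)` of the relaxed system on `[0, T)` with initial datum `Qinit`,
where `Ñ` is unconstrained in sign. -/
structure IsRelaxedSol (K : ℝ → ℝ) (ΦF : ℝ) (T : ℝ≥0∞) (Qinit : ℝ → ℝ)
    (Q : ℝ → ℝ → ℝ) (Ntil : ℝ → ℝ) : Prop where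
  initReg : ContDiffOn ℝ 1 Qinit (Icc 0 1)
  init0 : Qinit 0 = 0
  init1 : Qinit 1 = ΦF
  reg : ContDiffOn ℝ 1 (Function.uncurry Q) (Ico0 T ×ˢ Icc (0 : ℝ) 1)
  Ncont : ContinuousOn Ntil (Ico0 T)
  pde : ∀ τ ∈ Ico0 T, ∀ η ∈ Ioo (0 : ℝ) 1,
    pdTau Q τ η + pdEta Q τ η = Ntil τ + K (Q τ η)
  bc : ∀ τ ∈ Ico0 T, Q τ 0 = 0
  Ndef : ∀ τ ∈ Ico0 T, Ntil τ = pdEta Q τ 1 - K ΦF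
  init : ∀ η ∈ Icc (0 : ℝ) 1, Q 0 η = Qinit η

/-- A steady state `(Q*, N*)` of the Q-system. -/
def IsSteadyState (K : ℝ → ℝ) (ΦF : ℝ) (Qs : ℝ → ℝ) (Ns : ℝ) : Prop :=
  ContDiffOn ℝ 1 Qs (Icc 0 1) ∧ 0 < Ns ∧
    (∀ η ∈ Icc (0 : ℝ) 1, derivWithin Qs (Icc 0 1) η = K (Qs η) + 1 / Ns) ∧
    Qs 0 = 0 ∧ Qs 1 = ΦF

/-- `P₀ f := f - ∫₀¹ f`. -/
def P0 (f : ℝ → ℝ) (η : ℝ) : ℝ := f η - ∫ x in (0 : ℝ)..1, f x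

/-- `H_init := Q_init' - K ∘ Q_init` (derivative within `[0,1]`). -/
def Hinit (K : ℝ → ℝ) (Qinit : ℝ → ℝ) (η : ℝ) : ℝ :=
  derivWithin Qinit (Icc 0 1) η - K (Qinit η)

/-!
Label the characteristics `τ - η = σ` of the transport equation by `σ`. Along each of them the
density `f = ∂η Q` solves `f' = K'(Q) f`, a characteristic leaving at `η = 1` with density `f`
re-enters at `η = 0` with density `f + K(0) - K(Φ)`, and `1/N` is the excess of the outgoing
density over `K(Φ)`. This closed problem for `f` is solved by Banach's fixed point theorem in an
exponentially weighted sup norm. The excess `h = ∂η Q - K(Q)` satisfies `h' = K'(Q) (h - 1/N)`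
along characteristics, so for `K' < 0` neither it nor its value `1/N` at `η = 1` can reach zero
first.

In the `L¹` distance of two solutions the boundary terms cancel, so it changes at the rate
`∫ sign(f₁ - f₂) (K'(Q₁) f₁ - K'(Q₂) f₂)`. Write `K' = k_max - α - β` on `[0, Φ]` with `α ≥ 0`
antitone and `β ≥ 0` monotone. The constant contributes `k_max ‖f₁ - f₂‖`. In the other two terms
`α(Qᵢ) fᵢ` and `β(Qᵢ) fᵢ` are `η`-derivatives of primitives evaluated at `Qᵢ`, and `Q₁ = Q₂` at both
ends, so the factor `sign(f₁ - f₂)` may be replaced by `sign(f₁ - f₂) - sign(Q₁ - Q₂)` for `α` and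
by `sign(f₁ - f₂) + sign(Q₁ - Q₂)` for `β`; both integrands are then nonnegative and only help. A
steady state is itself a solution, so convergence to it and its uniqueness are both instances of
this contraction.
-/

/-! ### Scalar estimates -/

theorem le_mul_exp_integral_of_deriv_le {y y' b : ℝ → ℝ} {s t : ℝ} (hst : s ≤ t)
    (hb : Continuous b) (hy : ∀ r ∈ Icc s t, HasDerivAt y (y' r) r)
    (hle : ∀ r ∈ Ioo s t, y' r ≤ b r * y r) :
    y t ≤ y s * exp (∫ r in s..t, b r) := by
  have hderiv : ∀ r ∈ Icc s t, HasDerivAt (fun x => y x * exp (-∫ u in s..x, b u))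
      ((y' r - b r * y r) * exp (-∫ u in s..r, b u)) r := fun r hr =>
    ((hy r hr).mul (hb.integral_hasStrictDerivAt s r).hasDerivAt.neg.exp).congr_deriv
      (by simp only [Pi.neg_apply]; ring)
  have hanti : AntitoneOn (fun x => y x * exp (-∫ u in s..x, b u)) (Icc s t) := by
    refine antitoneOn_of_deriv_nonpos (convex_Icc s t)
      (fun r hr => (hderiv r hr).continuousAt.continuousWithinAt)
      (fun r hr => (hderiv r (interior_subset hr)).differentiableAt.differentiableWithinAt)
      fun r hr => ?_
    rw [(hderiv r (interior_subset hr)).deriv]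
    rw [interior_Icc] at hr
    exact mul_nonpos_of_nonpos_of_nonneg (sub_nonpos.2 (hle r hr)) (exp_pos _).le
  have h := hanti (left_mem_Icc.2 hst) (right_mem_Icc.2 hst) hst
  simp only [intervalIntegral.integral_same, neg_zero, exp_zero, mul_one, exp_neg] at h
  rwa [← div_eq_mul_inv, div_le_iff₀ (exp_pos _)] at h

theorem forall_pos_of_forall_Ico_pos {n : ℝ → ℝ} (hn : Continuous n)
    (hstep : ∀ t, 0 ≤ t → (∀ s ∈ Ico 0 t, 0 < n s) → 0 < n t) {t : ℝ} (ht : 0 ≤ t) :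
    0 < n t := by
  by_contra! hneg
  set bad : Set ℝ := Ici 0 ∩ n ⁻¹' Iic 0
  have hbelow : BddBelow bad := ⟨0, fun _ h => h.1⟩
  have hmem : sInf bad ∈ bad :=
    (isClosed_Ici.inter (isClosed_Iic.preimage hn)).csInf_mem ⟨t, ht, hneg⟩ hbelow
  refine (hstep _ hmem.1 fun s hs => ?_).not_ge hmem.2
  by_contra! h
  exact (csInf_le hbelow ⟨hs.1, h⟩).not_gt hs.2

theorem forall_nonneg_of_step {p : ℝ → Prop} {δ : ℝ} (hδ : 0 < δ) (h0 : p 0)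
    (hstep : ∀ s, 0 ≤ s → p s → ∀ t ∈ Icc s (s + δ), p t) {t : ℝ} (ht : 0 ≤ t) : p t := by
  have hgrid : ∀ m : ℕ, p (m * δ) := by
    intro m
    induction m with
    | zero => simpa using h0
    | succ m ih =>
      refine hstep _ (by positivity) ih _ ⟨?_, ?_⟩ <;> push_cast <;> linarith
  have hle : ⌊t / δ⌋₊ * δ ≤ t := (le_div_iff₀ hδ).1 (Nat.floor_le (by positivity))
  have hlt : t < (⌊t / δ⌋₊ + 1) * δ := (div_lt_iff₀ hδ).1 (Nat.lt_floor_add_one _)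
  exact hstep _ (by positivity) (hgrid _) t ⟨hle, by linarith⟩

theorem eq_const_of_hasDerivWithinAt_sub {K y : ℝ → ℝ} {L : NNReal} {Φ t : ℝ}
    (hK : LipschitzWith L K) (hy : ∀ s, 0 ≤ s → HasDerivWithinAt y (K (y s) - K Φ) (Ici 0) s)
    (h0 : y 0 = Φ) (ht : 0 ≤ t) : y t = Φ := by
  have hlip : ∀ _ : ℝ, LipschitzWith L fun x => K x - K Φ := fun _ =>
    LipschitzWith.of_dist_le_mul fun x z => by simpa using hK.dist_le_mul x z
  refine ODE_solution_unique (v := fun _ x => K x - K Φ) hlip (f := y) (g := fun _ => Φ)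
    (fun s hs => (hy s hs.1).continuousWithinAt.mono Icc_subset_Ici_self)
    (fun s hs => (hy s hs.1).mono (Ici_subset_Ici.2 hs.1)) continuousOn_const
    (fun s _ => ?_) h0 (right_mem_Icc.2 ht)
  simpa using hasDerivWithinAt_const s (Ici s) Φ

section IntervalDerivative

variable {Q₁ Q₂ : ℝ → ℝ} {a b x : ℝ}

theorem integral_derivWithin_eq_sub (hQ : ContDiffOn ℝ 1 Q₁ (Icc a b)) (hx : x ∈ Icc a b) :
    ∫ y in a..x, derivWithin Q₁ (Icc a b) y = Q₁ x - Q₁ a := by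
  rcases hx.1.eq_or_lt with rfl | hax
  · simp
  have hsub : Icc a x ⊆ Icc a b := Icc_subset_Icc_right hx.2
  have hcont := hQ.continuousOn_derivWithin (uniqueDiffOn_Icc (hax.trans_le hx.2)) le_rfl
  exact intervalIntegral.integral_eq_sub_of_hasDerivAt_of_le hx.1 (hQ.continuousOn.mono hsub)
    (fun y hy => (hQ.differentiableOn one_ne_zero y
      (hsub (Ioo_subset_Icc_self hy))).hasDerivWithinAt.hasDerivAt
      (Icc_mem_nhds hy.1 (hy.2.trans_le hx.2)))
    ((hcont.mono hsub).intervalIntegrable_of_Icc hx.1)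

theorem abs_sub_le_integral_abs_derivWithin_sub (hQ₁ : ContDiffOn ℝ 1 Q₁ (Icc a b))
    (hQ₂ : ContDiffOn ℝ 1 Q₂ (Icc a b)) (ha : Q₁ a = Q₂ a) (hx : x ∈ Icc a b) :
    |Q₁ x - Q₂ x| ≤ ∫ y in a..b, |derivWithin Q₁ (Icc a b) y - derivWithin Q₂ (Icc a b) y| := by
  rcases (hx.1.trans hx.2).eq_or_lt with rfl | hab
  · rw [le_antisymm hx.2 hx.1, ha]
    simp
  have hsub : Icc a x ⊆ Icc a b := Icc_subset_Icc_right hx.2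
  have hcont₁ := hQ₁.continuousOn_derivWithin (uniqueDiffOn_Icc hab) le_rfl
  have hcont₂ := hQ₂.continuousOn_derivWithin (uniqueDiffOn_Icc hab) le_rfl
  have hdiff : Q₁ x - Q₂ x =
      ∫ y in a..x, (derivWithin Q₁ (Icc a b) y - derivWithin Q₂ (Icc a b) y) := by
    rw [intervalIntegral.integral_sub ((hcont₁.mono hsub).intervalIntegrable_of_Icc hx.1)
      ((hcont₂.mono hsub).intervalIntegrable_of_Icc hx.1), integral_derivWithin_eq_sub hQ₁ hx,
      integral_derivWithin_eq_sub hQ₂ hx, ha]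
    ring
  rw [hdiff]
  exact (intervalIntegral.abs_integral_le_integral_abs hx.1).trans
    (intervalIntegral.integral_mono_interval le_rfl hx.1 hx.2 (.of_forall fun _ => abs_nonneg _)
      ((hcont₁.sub hcont₂).abs.intervalIntegrable_of_Icc hab.le))

end IntervalDerivative

/-! ### Densities in characteristic labels -/

section Partials

variable {F F₁ F₂ : ℝ → ℝ → ℝ}

theorem hasStrictFDerivAt_of_continuous_partials (hF₁ : Continuous (Function.uncurry F₁))
    (hF₂ : Continuous (Function.uncurry F₂))
    (hfst : ∀ x y, HasDerivAt (fun s => F s y) (F₁ x y) x)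
    (hsnd : ∀ x y, HasDerivAt (F x) (F₂ x y) y) (z : ℝ × ℝ) :
    HasStrictFDerivAt (Function.uncurry F)
      ((ContinuousLinearMap.toSpanSingleton ℝ (F₁ z.1 z.2)).coprod
        (ContinuousLinearMap.toSpanSingleton ℝ (F₂ z.1 z.2))) z :=
  have hcont := (ContinuousLinearMap.toSpanSingletonCLE (𝕜 := ℝ) (E := ℝ)).continuous
  hasStrictFDerivAt_uncurry_coprod
    (f₁ := fun x y => ContinuousLinearMap.toSpanSingleton ℝ (F₁ x y))
    (f₂ := fun x y => ContinuousLinearMap.toSpanSingleton ℝ (F₂ x y))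
    (Eventually.of_forall fun v => (hfst v.1 v.2).hasFDerivAt)
    (Eventually.of_forall fun v => (hsnd v.1 v.2).hasFDerivAt)
    (hcont.comp hF₁).continuousAt (hcont.comp hF₂).continuousAt

theorem contDiff_one_of_continuous_partials (hF₁ : Continuous (Function.uncurry F₁))
    (hF₂ : Continuous (Function.uncurry F₂))
    (hfst : ∀ x y, HasDerivAt (fun s => F s y) (F₁ x y) x)
    (hsnd : ∀ x y, HasDerivAt (F x) (F₂ x y) y) : ContDiff ℝ 1 (Function.uncurry F) := by
  refine contDiff_one_iff_hasFDerivAt.2 ⟨_, ?_, fun z =>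
    (hasStrictFDerivAt_of_continuous_partials hF₁ hF₂ hfst hsnd z).hasFDerivAt⟩
  have hcont := (ContinuousLinearMap.toSpanSingletonCLE (𝕜 := ℝ) (E := ℝ)).continuous
  simp only [← ContinuousLinearMap.comp_fst_add_comp_snd]
  exact ((hcont.comp hF₁).clm_comp continuous_const).add
    ((hcont.comp hF₂).clm_comp continuous_const)

end Partials

/-- The primitive of `f` in its second variable. -/
def primitive (f : ℝ → ℝ → ℝ) (t b : ℝ) : ℝ := ∫ σ in (0 : ℝ)..b, f t σ

/-- The phase profile `η ↦ Q(τ, η)` whose `η`-derivative at time `τ` is `f τ (τ - η)`. The density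
`f` is indexed by time and by the label `σ = τ - η` of the characteristic through `(τ, η)`, so
that transport is differentiation of `f` in time at a fixed label. -/
def phase (f : ℝ → ℝ → ℝ) (τ η : ℝ) : ℝ := ∫ σ in (τ - η)..τ, f τ σ

section Phase

variable {f f' : ℝ → ℝ → ℝ}

theorem continuous_primitive (hf : Continuous (Function.uncurry f)) :
    Continuous (Function.uncurry (primitive f)) :=
  intervalIntegral.continuous_parametric_primitive_of_continuous hf

theorem hasDerivAt_primitive_snd (hf : Continuous (Function.uncurry f)) (t b : ℝ) :
    HasDerivAt (primitive f t) (f t b) b :=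
  ((hf.uncurry_left t).integral_hasStrictDerivAt 0 b).hasDerivAt

theorem hasDerivAt_primitive_fst (hf : Continuous (Function.uncurry f))
    (hf' : Continuous (Function.uncurry f'))
    (hderiv : ∀ τ σ, HasDerivAt (fun t => f t σ) (f' τ σ) τ) (t b : ℝ) :
    HasDerivAt (fun s => primitive f s b) (primitive f' t b) t := by
  have hcompact : IsCompact (Icc (t - 1) (t + 1) ×ˢ uIcc 0 b) := isCompact_Icc.prod isCompact_uIcc
  obtain ⟨C, hC⟩ := hcompact.exists_bound_of_continuousOn hf'.continuousOn
  exact (intervalIntegral.hasDerivAt_integral_of_dominated_loc_of_deriv_le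
    (bound := fun _ => C) (Icc_mem_nhds (by linarith) (by linarith))
    (Eventually.of_forall fun x => (hf.uncurry_left x).aestronglyMeasurable)
    ((hf.uncurry_left t).intervalIntegrable _ _) (hf'.uncurry_left t).aestronglyMeasurable
    (Eventually.of_forall fun σ hσ x hx => hC (x, σ) ⟨hx, uIoc_subset_uIcc hσ⟩)
    intervalIntegrable_const (Eventually.of_forall fun σ _ x _ => hderiv x σ)).2

theorem hasDerivAt_primitive_diag (hf : Continuous (Function.uncurry f))
    (hf' : Continuous (Function.uncurry f'))
    (hderiv : ∀ τ σ, HasDerivAt (fun t => f t σ) (f' τ σ) τ) (η t : ℝ) :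
    HasDerivAt (fun s => primitive f s (s - η)) (primitive f' t (t - η) + f t (t - η)) t := by
  have hstrict := hasStrictFDerivAt_of_continuous_partials (continuous_primitive hf') hf
    (hasDerivAt_primitive_fst hf hf' hderiv) (hasDerivAt_primitive_snd hf) (t, t - η)
  have hcurve : HasDerivAt (fun s => (s, s - η)) ((1 : ℝ), (1 : ℝ)) t :=
    (hasDerivAt_id t).prodMk ((hasDerivAt_id t).sub_const η)
  refine (hstrict.hasFDerivAt.comp_hasDerivAt t hcurve).congr_deriv ?_
  simp

theorem phase_eq_primitive_sub (hf : Continuous (Function.uncurry f)) (τ η : ℝ) :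
    phase f τ η = primitive f τ τ - primitive f τ (τ - η) :=
  (intervalIntegral.integral_interval_sub_left ((hf.uncurry_left τ).intervalIntegrable _ _)
    ((hf.uncurry_left τ).intervalIntegrable _ _)).symm

theorem phase_eq_integral (f : ℝ → ℝ → ℝ) (τ η : ℝ) :
    phase f τ η = ∫ x in (0 : ℝ)..η, f τ (τ - x) := by
  simp [phase, intervalIntegral.integral_comp_sub_left (fun y => f τ y)]

@[simp]
theorem phase_zero (f : ℝ → ℝ → ℝ) (τ : ℝ) : phase f τ 0 = 0 := by simp [phase]

theorem contDiff_phase (hf : Continuous (Function.uncurry f))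
    (hf' : Continuous (Function.uncurry f'))
    (hderiv : ∀ τ σ, HasDerivAt (fun t => f t σ) (f' τ σ) τ) :
    ContDiff ℝ 1 (Function.uncurry (phase f)) := by
  have hprim : ContDiff ℝ 1 (Function.uncurry (primitive f)) :=
    contDiff_one_of_continuous_partials (continuous_primitive hf') hf
      (hasDerivAt_primitive_fst hf hf' hderiv) (hasDerivAt_primitive_snd hf)
  have heq : Function.uncurry (phase f) = fun z : ℝ × ℝ =>
      Function.uncurry (primitive f) (z.1, z.1) -
        Function.uncurry (primitive f) (z.1, z.1 - z.2) :=
    funext fun z => phase_eq_primitive_sub hf z.1 z.2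
  rw [heq]
  exact (hprim.comp (contDiff_fst.prodMk contDiff_fst)).sub
    (hprim.comp (contDiff_fst.prodMk (contDiff_fst.sub contDiff_snd)))

theorem hasDerivAt_phase_eta (hf : Continuous (Function.uncurry f)) (τ η : ℝ) :
    HasDerivAt (phase f τ) (f τ (τ - η)) η := by
  rw [funext (phase_eq_integral f τ)]
  have hcont : Continuous fun x => f τ (τ - x) := (hf.uncurry_left τ).comp (continuous_sub_left τ)
  exact (hcont.integral_hasStrictDerivAt 0 η).hasDerivAt

theorem hasDerivAt_phase_tau (hf : Continuous (Function.uncurry f))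
    (hf' : Continuous (Function.uncurry f'))
    (hderiv : ∀ τ σ, HasDerivAt (fun t => f t σ) (f' τ σ) τ) (τ η : ℝ) :
    HasDerivAt (fun s => phase f s η) (f τ τ - f τ (τ - η) + phase f' τ η) τ := by
  have hdiag := hasDerivAt_primitive_diag hf hf' hderiv
  have h := (hdiag 0 τ).sub (hdiag η τ)
  simp only [sub_zero] at h
  refine (h.congr_of_eventuallyEq ?_).congr_deriv ?_
  · exact Eventually.of_forall fun s => phase_eq_primitive_sub hf s η
  · rw [phase_eq_primitive_sub hf']; ring

theorem hasDerivAt_phase_characteristic (hf : Continuous (Function.uncurry f))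
    (hf' : Continuous (Function.uncurry f'))
    (hderiv : ∀ τ σ, HasDerivAt (fun t => f t σ) (f' τ σ) τ) (τ σ : ℝ) :
    HasDerivAt (fun s => phase f s (s - σ)) (f τ τ + phase f' τ (τ - σ)) τ := by
  have h := (hasDerivAt_primitive_diag hf hf' hderiv 0 τ).sub
    (hasDerivAt_primitive_fst hf hf' hderiv τ σ)
  simp only [sub_zero] at h
  refine (h.congr_of_eventuallyEq ?_).congr_deriv ?_
  · exact Eventually.of_forall fun s => by
      simpa using phase_eq_primitive_sub hf s (s - σ)
  · rw [phase_eq_primitive_sub hf', sub_sub_cancel]; ring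

end Phase

/-- The integral of the rate `a` along the characteristic labelled `σ`, from the time `max σ 0` at
which that characteristic enters `[0, ∞) × [0, 1]` up to time `τ`. -/
def characteristicExponent (a : ℝ → ℝ → ℝ) (τ σ : ℝ) : ℝ := ∫ s in (max σ 0)..τ, a s (s - σ)

/-- The density that starts with the value `P σ` on the characteristic labelled `σ` and grows
along it at the rate `a`. -/
def transported (P : ℝ → ℝ) (a : ℝ → ℝ → ℝ) (τ σ : ℝ) : ℝ :=
  P σ * exp (characteristicExponent a τ σ)

section Transport

variable {P : ℝ → ℝ} {a : ℝ → ℝ → ℝ}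

theorem continuous_along_characteristic (ha : Continuous (Function.uncurry a)) (σ : ℝ) :
    Continuous fun s => a s (s - σ) :=
  ha.comp (f := fun s => (s, s - σ)) (by fun_prop)

theorem continuous_characteristicExponent (ha : Continuous (Function.uncurry a)) :
    Continuous (Function.uncurry (characteristicExponent a)) := by
  have hsplit : Function.uncurry (characteristicExponent a) = fun z : ℝ × ℝ =>
      (∫ s in (0 : ℝ)..z.1, a s (s - z.2)) - ∫ s in (0 : ℝ)..(max z.2 0), a s (s - z.2) :=
    funext fun z => (intervalIntegral.integral_interval_sub_left
      ((continuous_along_characteristic ha z.2).intervalIntegrable _ _)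
      ((continuous_along_characteristic ha z.2).intervalIntegrable _ _)).symm
  have hcont : Continuous (Function.uncurry fun (z : ℝ × ℝ) (s : ℝ) => a s (s - z.2)) :=
    ha.comp (f := fun w : (ℝ × ℝ) × ℝ => (w.2, w.2 - w.1.2)) (by fun_prop)
  rw [hsplit]
  exact (intervalIntegral.continuous_parametric_intervalIntegral_of_continuous hcont
      continuous_fst).sub
    (intervalIntegral.continuous_parametric_intervalIntegral_of_continuous hcont (by fun_prop))

theorem characteristicExponent_le {κ τ σ : ℝ} (ha : Continuous (Function.uncurry a))
    (hκ : ∀ s η, a s η ≤ κ) (hτ : 0 ≤ τ) (hσ : σ ≤ τ) :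
    characteristicExponent a τ σ ≤ (τ - max σ 0) * κ := by
  simpa [characteristicExponent] using intervalIntegral.integral_mono_on (max_le hσ hτ)
    ((continuous_along_characteristic ha σ).intervalIntegrable _ _)
    (intervalIntegrable_const (μ := volume)) fun s _ => hκ s (s - σ)

theorem characteristicExponent_nonpos {τ σ : ℝ} (ha : Continuous (Function.uncurry a))
    (ha₀ : ∀ s η, a s η ≤ 0) (hτ : 0 ≤ τ) (hσ : σ ≤ τ) : characteristicExponent a τ σ ≤ 0 := by
  simpa using characteristicExponent_le ha ha₀ hτ hσ

theorem continuous_transported (hP : Continuous P) (ha : Continuous (Function.uncurry a)) :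
    Continuous (Function.uncurry (transported P a)) :=
  (hP.comp continuous_snd).mul (Real.continuous_exp.comp (continuous_characteristicExponent ha))

theorem hasDerivAt_transported (P : ℝ → ℝ) (ha : Continuous (Function.uncurry a)) (τ σ : ℝ) :
    HasDerivAt (fun t => transported P a t σ) (a τ (τ - σ) * transported P a τ σ) τ :=
  have hexp := (continuous_along_characteristic ha σ).integral_hasStrictDerivAt (max σ 0) τ
  (hexp.hasDerivAt.exp.const_mul (P σ)).congr_deriv
    (by simp only [transported, characteristicExponent]; ring)

theorem transported_entry (P : ℝ → ℝ) (a : ℝ → ℝ → ℝ) (σ : ℝ) :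
    transported P a (max σ 0) σ = P σ := by
  simp [transported, characteristicExponent]

theorem transported_self (P : ℝ → ℝ) (a : ℝ → ℝ → ℝ) {τ : ℝ} (hτ : 0 ≤ τ) :
    transported P a τ τ = P τ := by
  simpa [hτ] using transported_entry P a τ

theorem transported_time_zero (P : ℝ → ℝ) (a : ℝ → ℝ → ℝ) {σ : ℝ} (hσ : σ ≤ 0) :
    transported P a 0 σ = P σ := by
  simpa [hσ] using transported_entry P a σ

end Transport

/-! ### Construction of the density -/

section FixedPoint

open scoped BoundedContinuousFunction

/-- The density represented by the bounded function `u`. The factor `exp (lam * τ)` makes the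
integrals in time contract, the factor `exp (-2 * η)` the influx at `η = 0`. -/
def weightedDensity (lam : ℝ) (u : ℝ × ℝ →ᵇ ℝ) (τ η : ℝ) : ℝ := exp (lam * τ - 2 * η) * u (τ, η)

/-- The growth rate `k (Q(τ, η))` of the density represented by `u`, extended from
`[0, ∞) × [0, 1]` to the plane by projection. -/
def growthRate (k : ℝ → ℝ) (lam : ℝ) (u : ℝ × ℝ →ᵇ ℝ) (τ η : ℝ) : ℝ :=
  k (primitive (weightedDensity lam u) (max τ 0) (projIcc 0 1 zero_le_one η))

/-- The density at the entry of each characteristic: the datum `v` for labels `σ ≤ 0`, the influx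
for labels `σ ≥ 0`. The influx is truncated at `B`, and normalized to equal `v 0` at time `0` so
that the two branches match for every `u`. -/
def entryDensity (v : ℝ → ℝ) (c : ℝ) {B : ℝ} (hB : 0 ≤ B) (lam : ℝ) (u : ℝ × ℝ →ᵇ ℝ)
    (σ : ℝ) : ℝ :=
  v (max (-σ) 0) + projIcc 0 B hB (weightedDensity lam u (max σ 0) 1 + c) -
    projIcc 0 B hB (weightedDensity lam u 0 1 + c)

/-- The weighted density obtained by transporting the entry density of `u` at the growth rate
of `u`. -/
def transportStep (k v : ℝ → ℝ) (c : ℝ) {B : ℝ} (hB : 0 ≤ B) (lam : ℝ) (u : ℝ × ℝ →ᵇ ℝ)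
    (z : ℝ × ℝ) : ℝ :=
  transported (entryDensity v c hB lam u) (growthRate k lam u) (max z.1 0)
      (max z.1 0 - projIcc 0 1 zero_le_one z.2) *
    exp (-(lam * max z.1 0 - 2 * projIcc 0 1 zero_le_one z.2))

variable {k v : ℝ → ℝ} {c B lam : ℝ} {hB : 0 ≤ B}

theorem continuous_weightedDensity (u : ℝ × ℝ →ᵇ ℝ) :
    Continuous (Function.uncurry (weightedDensity lam u)) := by
  unfold weightedDensity Function.uncurry
  fun_prop

theorem continuous_growthRate (hk : Continuous k) (u : ℝ × ℝ →ᵇ ℝ) :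
    Continuous (Function.uncurry (growthRate k lam u)) :=
  hk.comp ((continuous_primitive (continuous_weightedDensity u)).comp
    (f := fun z : ℝ × ℝ => (max z.1 0, (projIcc 0 1 zero_le_one z.2 : ℝ))) (by fun_prop))

theorem continuous_entryDensity (hv : Continuous v) (u : ℝ × ℝ →ᵇ ℝ) :
    Continuous (entryDensity v c hB lam u) := by
  have hout : Continuous fun σ => weightedDensity lam u (max σ 0) 1 :=
    (continuous_weightedDensity u).comp (f := fun σ => (max σ 0, (1 : ℝ))) (by fun_prop)
  unfold entryDensity
  fun_prop

theorem continuous_transportStep (hk : Continuous k) (hv : Continuous v) (u : ℝ × ℝ →ᵇ ℝ) :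
    Continuous (transportStep k v c hB lam u) := by
  refine Continuous.mul ?_ (by fun_prop)
  exact (continuous_transported (continuous_entryDensity hv u) (continuous_growthRate hk u)).comp
    (f := fun z : ℝ × ℝ => (max z.1 0, max z.1 0 - (projIcc 0 1 zero_le_one z.2 : ℝ)))
    (by fun_prop)

theorem abs_entryDensity_le (hv : ∀ x, v x ∈ Icc 0 B) (u : ℝ × ℝ →ᵇ ℝ) (σ : ℝ) :
    |entryDensity v c hB lam u σ| ≤ 2 * B := by
  obtain ⟨hv₀, hvB⟩ := hv (max (-σ) 0)
  obtain ⟨hσ₀, hσB⟩ := (projIcc 0 B hB (weightedDensity lam u (max σ 0) 1 + c)).2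
  obtain ⟨h0₀, h0B⟩ := (projIcc 0 B hB (weightedDensity lam u 0 1 + c)).2
  exact abs_le.2 ⟨by unfold entryDensity; linarith, by unfold entryDensity; linarith⟩

theorem abs_transportStep_le (hk : Continuous k) (hk₀ : ∀ x, k x ≤ 0) (hv : ∀ x, v x ∈ Icc 0 B)
    (hlam : 0 ≤ lam) (u : ℝ × ℝ →ᵇ ℝ) (z : ℝ × ℝ) :
    |transportStep k v c hB lam u z| ≤ 2 * B * exp 2 := by
  have hτ : 0 ≤ max z.1 0 := le_max_right _ _
  obtain ⟨hη₀, hη₁⟩ := (projIcc (0 : ℝ) 1 zero_le_one z.2).2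
  have hexponent := characteristicExponent_nonpos (continuous_growthRate (lam := lam) hk u)
    (fun s η => hk₀ _) hτ (sub_le_self (max z.1 0) hη₀)
  have htransported : |transported (entryDensity v c hB lam u) (growthRate k lam u) (max z.1 0)
      (max z.1 0 - projIcc 0 1 zero_le_one z.2)| ≤ 2 * B := by
    rw [transported, abs_mul, abs_exp]
    exact (mul_le_of_le_one_right (abs_nonneg _) (exp_le_one_iff.2 hexponent)).trans
      (abs_entryDensity_le hv u _)
  rw [transportStep, abs_mul, abs_exp]
  gcongr
  linarith [mul_nonneg hlam hτ]

/-- `transportStep` as a self-map of the bounded continuous functions. -/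
def transportMap (hk : Continuous k) (hk₀ : ∀ x, k x ≤ 0) (hv : Continuous v)
    (hvB : ∀ x, v x ∈ Icc 0 B) (c : ℝ) (hB : 0 ≤ B) (hlam : 0 ≤ lam) (u : ℝ × ℝ →ᵇ ℝ) :
    ℝ × ℝ →ᵇ ℝ :=
  BoundedContinuousFunction.ofNormedAddCommGroup (transportStep k v c hB lam u)
    (continuous_transportStep hk hv u) (2 * B * exp 2) (abs_transportStep_le hk hk₀ hvB hlam u)

theorem abs_weightedDensity_sub_le (u₁ u₂ : ℝ × ℝ →ᵇ ℝ) (τ η : ℝ) :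
    |weightedDensity lam u₁ τ η - weightedDensity lam u₂ τ η| ≤
      dist u₁ u₂ * exp (lam * τ - 2 * η) := by
  rw [weightedDensity, weightedDensity, ← mul_sub, abs_mul, abs_exp, mul_comm, ← Real.dist_eq]
  gcongr
  exact BoundedContinuousFunction.dist_coe_le_dist _

theorem abs_primitive_weightedDensity_sub_le (u₁ u₂ : ℝ × ℝ →ᵇ ℝ) (τ : ℝ) {η : ℝ}
    (hη : η ∈ Icc (0 : ℝ) 1) :
    |primitive (weightedDensity lam u₁) τ η - primitive (weightedDensity lam u₂) τ η| ≤
      dist u₁ u₂ * exp (lam * τ) := by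
  rw [primitive, primitive, ← intervalIntegral.integral_sub
    (((continuous_weightedDensity u₁).uncurry_left τ).intervalIntegrable _ _)
    (((continuous_weightedDensity u₂).uncurry_left τ).intervalIntegrable _ _)]
  have hbound := intervalIntegral.norm_integral_le_of_norm_le_const (a := 0) (b := η)
    (f := fun x => weightedDensity lam u₁ τ x - weightedDensity lam u₂ τ x)
    (C := dist u₁ u₂ * exp (lam * τ)) fun x hx => by
      rw [uIoc_of_le hη.1] at hx
      refine (abs_weightedDensity_sub_le u₁ u₂ τ x).trans ?_
      gcongr
      linarith [hx.1]
  rw [sub_zero, abs_of_nonneg hη.1] at hbound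
  exact hbound.trans (mul_le_of_le_one_right (by positivity) hη.2)

theorem integral_exp_mul_le (hlam : 0 < lam) (s t : ℝ) :
    ∫ r in s..t, exp (lam * r) ≤ exp (lam * t) / lam := by
  rw [intervalIntegral.integral_comp_mul_left (fun r => exp r) hlam.ne', integral_exp, smul_eq_mul,
    inv_mul_eq_div]
  gcongr
  exact sub_le_self _ (exp_pos _).le

theorem abs_characteristicExponent_growthRate_sub_le {L : NNReal} (hk : LipschitzWith L k)
    (hlam : 0 < lam) (u₁ u₂ : ℝ × ℝ →ᵇ ℝ) {τ σ : ℝ} (hτ : 0 ≤ τ) (hσ : σ ≤ τ) :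
    |characteristicExponent (growthRate k lam u₁) τ σ -
      characteristicExponent (growthRate k lam u₂) τ σ| ≤
      L * dist u₁ u₂ * (exp (lam * τ) / lam) := by
  have hrate : ∀ s ∈ Ioc (max σ 0) τ, ‖growthRate k lam u₁ s (s - σ) -
      growthRate k lam u₂ s (s - σ)‖ ≤ L * dist u₁ u₂ * exp (lam * s) := fun s hs => by
    refine (hk.norm_sub_le _ _).trans ?_
    rw [mul_assoc, max_eq_left ((le_max_right _ _).trans hs.1.le)]
    exact mul_le_mul_of_nonneg_left (abs_primitive_weightedDensity_sub_le u₁ u₂ s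
      (projIcc (0 : ℝ) 1 zero_le_one (s - σ)).2) L.2
  rw [characteristicExponent, characteristicExponent, ← intervalIntegral.integral_sub
    ((continuous_along_characteristic (continuous_growthRate hk.continuous u₁) σ).intervalIntegrable
      _ _)
    ((continuous_along_characteristic (continuous_growthRate hk.continuous u₂) σ).intervalIntegrable
      _ _)]
  refine (intervalIntegral.norm_integral_le_of_norm_le (max_le hσ hτ)
    (Eventually.of_forall hrate) (Continuous.intervalIntegrable (by fun_prop) _ _)).trans ?_
  rw [intervalIntegral.integral_const_mul]
  gcongr
  exact integral_exp_mul_le hlam _ _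

theorem abs_entryDensity_sub_le (hlam : 2 ≤ lam) (u₁ u₂ : ℝ × ℝ →ᵇ ℝ) {τ η : ℝ} (hη : 0 ≤ η) :
    |entryDensity v c hB lam u₁ (τ - η) - entryDensity v c hB lam u₂ (τ - η)| ≤
      dist u₁ u₂ * exp (lam * τ - 2 * η) / 2 := by
  rcases le_total τ η with h | h
  · simp only [entryDensity, max_eq_right (sub_nonpos.2 h), add_sub_cancel_right, sub_self,
      abs_zero]
    positivity
  have hexp : 4 ≤ exp 2 := by linarith [quadratic_le_exp_of_nonneg (zero_le_two (α := ℝ))]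
  have hinflux : ∀ r ≤ τ - η, |(projIcc 0 B hB (weightedDensity lam u₁ r 1 + c) : ℝ) -
      projIcc 0 B hB (weightedDensity lam u₂ r 1 + c)| ≤
      dist u₁ u₂ * exp (lam * τ - 2 * η) / 4 := fun r hr => calc
    _ ≤ |weightedDensity lam u₁ r 1 - weightedDensity lam u₂ r 1| := by
      simpa using abs_projIcc_sub_projIcc (h := hB) (c := weightedDensity lam u₁ r 1 + c)
        (d := weightedDensity lam u₂ r 1 + c)
    _ ≤ dist u₁ u₂ * exp (lam * r - 2 * 1) := abs_weightedDensity_sub_le u₁ u₂ r 1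
    _ ≤ dist u₁ u₂ * exp (lam * τ - 2 * η - 2) := by gcongr <;> nlinarith
    _ ≤ dist u₁ u₂ * exp (lam * τ - 2 * η) / 4 := by
      rw [exp_sub, ← mul_div_assoc]
      gcongr
  have hlast := hinflux (τ - η) le_rfl
  have hfirst := hinflux 0 (sub_nonneg.2 h)
  rw [entryDensity, entryDensity, max_eq_left (sub_nonneg.2 h)]
  rw [abs_le] at hlast hfirst ⊢
  constructor <;> linarith

theorem abs_exp_sub_exp_le_of_nonpos {x y : ℝ} (hx : x ≤ 0) (hy : y ≤ 0) :
    |exp x - exp y| ≤ |x - y| := by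
  simpa using (convex_Iic (0 : ℝ)).norm_image_sub_le_of_norm_deriv_le (f := exp) (C := 1)
    (fun _ _ => differentiableAt_exp) (fun z hz => by simpa using hz) hy hx

theorem abs_transported_sub_le {P₁ P₂ : ℝ → ℝ} {a₁ a₂ : ℝ → ℝ → ℝ} {τ σ : ℝ}
    (h₁ : characteristicExponent a₁ τ σ ≤ 0) (h₂ : characteristicExponent a₂ τ σ ≤ 0) :
    |transported P₁ a₁ τ σ - transported P₂ a₂ τ σ| ≤ |P₁ σ - P₂ σ| +
      |P₂ σ| * |characteristicExponent a₁ τ σ - characteristicExponent a₂ τ σ| := calc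
  _ = |(P₁ σ - P₂ σ) * exp (characteristicExponent a₁ τ σ) + P₂ σ *
        (exp (characteristicExponent a₁ τ σ) - exp (characteristicExponent a₂ τ σ))| := by
    rw [transported, transported]; ring_nf
  _ ≤ |P₁ σ - P₂ σ| * exp (characteristicExponent a₁ τ σ) + |P₂ σ| *
        |exp (characteristicExponent a₁ τ σ) - exp (characteristicExponent a₂ τ σ)| := by
    rw [← abs_mul, ← abs_exp (characteristicExponent a₁ τ σ), ← abs_mul, abs_exp]
    exact abs_add_le _ _
  _ ≤ _ := add_le_add (mul_le_of_le_one_right (abs_nonneg _) (exp_le_one_iff.2 h₁))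
    (mul_le_mul_of_nonneg_left (abs_exp_sub_exp_le_of_nonpos h₁ h₂) (abs_nonneg _))

theorem abs_transportStep_sub_le {L : NNReal} (hk : LipschitzWith L k) (hk₀ : ∀ x, k x ≤ 0)
    (hv : ∀ x, v x ∈ Icc 0 B) (hlam : 2 ≤ lam) (hlamL : 8 * (B * L * exp 2) ≤ lam)
    (u₁ u₂ : ℝ × ℝ →ᵇ ℝ) (z : ℝ × ℝ) :
    |transportStep k v c hB lam u₁ z - transportStep k v c hB lam u₂ z| ≤
      3 / 4 * dist u₁ u₂ := by
  have hτ : 0 ≤ max z.1 0 := le_max_right _ _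
  obtain ⟨hη₀, hη₁⟩ := (projIcc (0 : ℝ) 1 zero_le_one z.2).2
  rw [transportStep, transportStep]
  set τ := max z.1 0
  set η : ℝ := ↑(projIcc (0 : ℝ) 1 zero_le_one z.2)
  have hσ : τ - η ≤ τ := sub_le_self τ hη₀
  have hexponent (u : ℝ × ℝ →ᵇ ℝ) : characteristicExponent (growthRate k lam u) τ (τ - η) ≤ 0 :=
    characteristicExponent_nonpos (continuous_growthRate hk.continuous u) (fun _ _ => hk₀ _) hτ hσ
  have hweight : exp (lam * τ) ≤ exp (lam * τ - 2 * η) * exp 2 := by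
    rw [← exp_add, exp_le_exp]; linarith
  have hexponent_sub : |entryDensity v c hB lam u₂ (τ - η)| *
      |characteristicExponent (growthRate k lam u₁) τ (τ - η) -
        characteristicExponent (growthRate k lam u₂) τ (τ - η)| ≤
      dist u₁ u₂ * exp (lam * τ - 2 * η) / 4 := calc
    _ ≤ 2 * B * (L * dist u₁ u₂ * (exp (lam * τ) / lam)) := by
      gcongr
      · exact abs_entryDensity_le hv u₂ _
      · exact abs_characteristicExponent_growthRate_sub_le hk (by linarith) u₁ u₂ hτ hσ
    _ ≤ 2 * B * (L * dist u₁ u₂ * (exp (lam * τ - 2 * η) * exp 2 / lam)) := by gcongr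
    _ = 8 * (B * L * exp 2) / lam * (dist u₁ u₂ * exp (lam * τ - 2 * η) / 4) := by ring
    _ ≤ _ := mul_le_of_le_one_left (by positivity) ((div_le_one (by linarith)).2 hlamL)
  rw [← sub_mul, abs_mul, abs_exp, exp_neg, mul_inv_le_iff₀ (exp_pos _)]
  have hsub := abs_transported_sub_le (P₁ := entryDensity v c hB lam u₁)
    (P₂ := entryDensity v c hB lam u₂) (hexponent u₁) (hexponent u₂)
  have hentry := abs_entryDensity_sub_le (v := v) (c := c) (hB := hB) (τ := τ) hlam u₁ u₂ hη₀
  linarith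

theorem contractingWith_transportMap {L : NNReal} (hk : LipschitzWith L k) (hk₀ : ∀ x, k x ≤ 0)
    (hv : Continuous v) (hvB : ∀ x, v x ∈ Icc 0 B) (hlam : 2 ≤ lam)
    (hlamL : 8 * (B * L * exp 2) ≤ lam) :
    ContractingWith (3 / 4)
      (transportMap hk.continuous hk₀ hv hvB c hB (zero_le_two.trans hlam)) := by
  refine ⟨by rw [div_lt_one] <;> norm_num, LipschitzWith.of_dist_le_mul fun u₁ u₂ => ?_⟩
  rw [BoundedContinuousFunction.dist_le (by positivity)]
  intro z
  simpa [transportMap, Real.dist_eq] using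
    abs_transportStep_sub_le (c := c) (hB := hB) hk hk₀ hvB hlam hlamL u₁ u₂ z

end FixedPoint

/-- `f` is a nonnegative density in characteristic labels, with time derivative `f'`, whose phase
profile `Q = phase f` satisfies `∂τ f = k(Q) f` on `[0, ∞) × [0, 1]` and whose inflow value exceeds
its outflow value by `c`. -/
structure IsTransportDensity (k : ℝ → ℝ) (c : ℝ) (f f' : ℝ → ℝ → ℝ) : Prop where
  continuous : Continuous (Function.uncurry f)
  continuous_deriv : Continuous (Function.uncurry f')
  hasDerivAt : ∀ τ σ, HasDerivAt (fun t => f t σ) (f' τ σ) τ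
  growth : ∀ τ, 0 ≤ τ → ∀ η ∈ Icc (0 : ℝ) 1, f' τ (τ - η) = k (phase f τ η) * f τ (τ - η)
  influx : ∀ τ, 0 ≤ τ → f τ τ = f τ (τ - 1) + c
  nonneg : ∀ τ σ, 0 ≤ f τ σ

section DensityExistence

open scoped BoundedContinuousFunction

variable {k v : ℝ → ℝ} {c B V κ lam : ℝ} {hB : 0 ≤ B} {u : ℝ × ℝ →ᵇ ℝ}

theorem exists_transportStep_eq {L : NNReal} (hk : LipschitzWith L k) (hk₀ : ∀ x, k x ≤ 0)
    (hv : Continuous v) (hvB : ∀ x, v x ∈ Icc 0 B) (c : ℝ) (hB : 0 ≤ B) :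
    ∃ (lam : ℝ) (u : ℝ × ℝ →ᵇ ℝ), ∀ z, transportStep k v c hB lam u z = u z := by
  obtain ⟨u, hu, -⟩ := (contractingWith_transportMap (c := c) (hB := hB) hk hk₀ hv hvB
    (le_max_left 2 (8 * (B * L * exp 2))) (le_max_right _ _)).exists_fixedPoint 0 (edist_ne_top _ _)
  exact ⟨_, u, DFunLike.congr_fun hu⟩

theorem weightedDensity_eq_transported (hu : ∀ z, transportStep k v c hB lam u z = u z) {τ η : ℝ}
    (hτ : 0 ≤ τ) (hη : η ∈ Icc (0 : ℝ) 1) :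
    weightedDensity lam u τ η =
      transported (entryDensity v c hB lam u) (growthRate k lam u) τ (τ - η) := by
  rw [weightedDensity, ← hu, transportStep, max_eq_left hτ, projIcc_of_mem zero_le_one hη, mul_comm,
    mul_assoc, ← exp_add, neg_add_cancel, exp_zero, mul_one]

theorem growthRate_eq (hu : ∀ z, transportStep k v c hB lam u z = u z) {τ η : ℝ} (hτ : 0 ≤ τ)
    (hη : η ∈ Icc (0 : ℝ) 1) :
    growthRate k lam u τ η =
      k (phase (transported (entryDensity v c hB lam u) (growthRate k lam u)) τ η) := by
  rw [growthRate, max_eq_left hτ, projIcc_of_mem zero_le_one hη, phase_eq_integral, primitive]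
  congr 1
  refine intervalIntegral.integral_congr fun x hx => ?_
  rw [uIcc_of_le hη.1] at hx
  exact weightedDensity_eq_transported hu hτ ⟨hx.1, hx.2.trans hη.2⟩

theorem entryDensity_of_nonpos {σ : ℝ} (hσ : σ ≤ 0) : entryDensity v c hB lam u σ = v (-σ) := by
  simp [entryDensity, hσ]

theorem entryDensity_of_nonneg (hu : ∀ z, transportStep k v c hB lam u z = u z)
    (hvB : ∀ x, v x ∈ Icc 0 B) (hcompat : v 1 + c = v 0) {σ : ℝ} (hσ : 0 ≤ σ) :
    entryDensity v c hB lam u σ = projIcc 0 B hB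
      (transported (entryDensity v c hB lam u) (growthRate k lam u) σ (σ - 1) + c) := by
  have hone : (1 : ℝ) ∈ Icc (0 : ℝ) 1 := right_mem_Icc.2 zero_le_one
  have hinitial : weightedDensity lam u 0 1 = v 1 := by
    rw [weightedDensity_eq_transported hu le_rfl hone, transported_time_zero _ _ (by norm_num),
      entryDensity_of_nonpos (by norm_num)]
    norm_num
  rw [← weightedDensity_eq_transported hu hσ hone, entryDensity, hinitial, hcompat,
    projIcc_of_mem hB (hvB 0)]
  simp [hσ]

theorem exists_truncation_level (hκ : κ < 0) (hV : 0 ≤ V) (hc : 0 ≤ c) :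
    ∃ B, V + c ≤ B ∧ B * exp κ + c ≤ B := by
  have hgap : 0 < 1 - exp κ := sub_pos.2 (exp_lt_one_iff.2 hκ)
  have hsum : c / (1 - exp κ) * (1 - exp κ) = c := div_mul_cancel₀ c hgap.ne'
  have hterm : 0 ≤ c / (1 - exp κ) := by positivity
  refine ⟨V + c + c / (1 - exp κ), by linarith, ?_⟩
  nlinarith [mul_nonneg (add_nonneg hV hc) hgap.le]

theorem transported_outflow_add_le {P : ℝ → ℝ} {a : ℝ → ℝ → ℝ} {τ : ℝ}
    (ha : Continuous (Function.uncurry a)) (hκ : κ ≤ 0) (haκ : ∀ s η, a s η ≤ κ)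
    (hP : ∀ σ, 0 ≤ P σ) (hPV : ∀ σ ≤ 0, P σ ≤ V) (hPB : ∀ σ, 0 ≤ σ → P σ ≤ B)
    (hVB : V + c ≤ B) (hBκ : B * exp κ + c ≤ B) (hτ : 0 ≤ τ) :
    transported P a τ (τ - 1) + c ≤ B := by
  have hexponent := characteristicExponent_le ha haκ hτ (sub_le_self τ zero_le_one)
  rcases le_total τ 1 with h | h
  · rw [max_eq_right (by linarith)] at hexponent
    have hexp := exp_le_one_iff.2 (hexponent.trans (mul_nonpos_of_nonneg_of_nonpos (by simpa) hκ))
    have hle := mul_le_of_le_one_right (hP (τ - 1)) hexp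
    unfold transported
    linarith [hPV (τ - 1) (by linarith)]
  · rw [max_eq_left (by linarith), sub_sub_cancel, one_mul] at hexponent
    have hle := mul_le_mul (hPB (τ - 1) (by linarith)) (exp_le_exp.2 hexponent) (exp_pos _).le
      ((hP 0).trans (hPB 0 le_rfl))
    unfold transported
    linarith

/-- The truncation at `B` is inactive along the fixed point because the exponential decay at rate
`κ` during one crossing compensates the gain `c` at the inflow. -/
theorem exists_isTransportDensity {L : NNReal} (hk : LipschitzWith L k) (hκ : κ < 0)
    (hkκ : ∀ x, k x ≤ κ) (hv : Continuous v) (hvV : ∀ x, v x ∈ Icc 0 V) (hc : 0 ≤ c)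
    (hcompat : v 1 + c = v 0) :
    ∃ f f', IsTransportDensity k c f f' ∧ ∀ σ ≤ 0, f 0 σ = v (-σ) := by
  obtain ⟨B, hVB, hBκ⟩ := exists_truncation_level hκ ((hvV 0).1.trans (hvV 0).2) hc
  have hvB : ∀ x, v x ∈ Icc 0 B := fun x => ⟨(hvV x).1, (hvV x).2.trans (by linarith)⟩
  have hB : 0 ≤ B := (hvB 0).1.trans (hvB 0).2
  obtain ⟨lam, u, hu⟩ :=
    exists_transportStep_eq hk (fun x => (hkκ x).trans hκ.le) hv hvB c hB
  set P := entryDensity v c hB lam u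
  set a := growthRate k lam u
  have hP : Continuous P := continuous_entryDensity hv u
  have ha : Continuous (Function.uncurry a) := continuous_growthRate hk.continuous u
  have hPin : ∀ σ ≤ 0, P σ = v (-σ) := fun σ => entryDensity_of_nonpos
  have hPout : ∀ σ, 0 ≤ σ → P σ = projIcc 0 B hB (transported P a σ (σ - 1) + c) :=
    fun σ => entryDensity_of_nonneg hu hvB hcompat
  have hPnonneg : ∀ σ, 0 ≤ P σ := fun σ => by
    rcases le_total σ 0 with hσ | hσ
    · exact hPin σ hσ ▸ (hvB _).1
    · exact hPout σ hσ ▸ (projIcc 0 B hB _).2.1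
  have hf : ∀ τ σ, 0 ≤ transported P a τ σ := fun τ σ => mul_nonneg (hPnonneg σ) (exp_pos _).le
  refine ⟨transported P a, fun τ σ => a τ (τ - σ) * transported P a τ σ,
    ⟨continuous_transported hP ha, ?_, hasDerivAt_transported P ha, fun τ hτ η hη => ?_,
      fun τ hτ => ?_, hf⟩, fun σ hσ => (transported_time_zero P a hσ).trans (hPin σ hσ)⟩
  · exact (ha.comp (f := fun z : ℝ × ℝ => (z.1, z.1 - z.2)) (by fun_prop)).mul
      (continuous_transported hP ha)
  · rw [sub_sub_cancel]
    exact congrArg (· * _) (growthRate_eq hu hτ hη)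
  · have hle := transported_outflow_add_le ha hκ.le (fun s η => hkκ _) hPnonneg
      (fun σ hσ => hPin σ hσ ▸ (hvV _).2) (fun σ hσ => hPout σ hσ ▸ (projIcc 0 B hB _).2.2)
      hVB hBκ hτ
    rw [transported_self P a hτ, hPout τ hτ,
      projIcc_of_mem hB ⟨add_nonneg (hf τ _) hc, hle⟩]

end DensityExistence

/-! ### From densities to classical solutions -/

namespace IsTransportDensity

variable {K k : ℝ → ℝ} {c Φ τ η σ : ℝ} {f f' : ℝ → ℝ → ℝ}

theorem continuous_phase (hf : IsTransportDensity k c f f') :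
    Continuous (Function.uncurry (phase f)) :=
  (contDiff_phase hf.continuous hf.continuous_deriv hf.hasDerivAt).continuous

theorem monotone_phase (hf : IsTransportDensity k c f f') (τ : ℝ) : Monotone (phase f τ) :=
  monotone_of_hasDerivAt_nonneg (hasDerivAt_phase_eta hf.continuous τ) fun _ => hf.nonneg _ _

theorem phase_deriv (hf : IsTransportDensity k c f f') (hK : ∀ x, HasDerivAt K (k x) x)
    (hk : Continuous k) (hτ : 0 ≤ τ) (hη : η ∈ Icc (0 : ℝ) 1) :
    phase f' τ η = K (phase f τ η) - K 0 := by
  have hderiv : ∀ x, HasDerivAt (fun y => K (phase f τ y))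
      (k (phase f τ x) * f τ (τ - x)) x := fun x =>
    (hK _).comp x (hasDerivAt_phase_eta hf.continuous τ x)
  have hcont : Continuous fun x => k (phase f τ x) * f τ (τ - x) :=
    (hk.comp (hf.continuous_phase.uncurry_left τ)).mul
      ((hf.continuous.uncurry_left τ).comp (continuous_sub_left τ))
  calc phase f' τ η = ∫ x in (0 : ℝ)..η, k (phase f τ x) * f τ (τ - x) := by
        rw [phase_eq_integral]
        refine intervalIntegral.integral_congr fun x hx => ?_
        rw [uIcc_of_le hη.1] at hx
        exact hf.growth τ hτ x ⟨hx.1, hx.2.trans hη.2⟩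
    _ = K (phase f τ η) - K 0 := by
        rw [intervalIntegral.integral_eq_sub_of_hasDerivAt (fun x _ => hderiv x)
          (hcont.intervalIntegrable _ _), phase_zero]

theorem hasDerivAt_phase_tau (hf : IsTransportDensity k (K 0 - K Φ) f f')
    (hK : ∀ x, HasDerivAt K (k x) x) (hk : Continuous k) (hτ : 0 ≤ τ) (hη : η ∈ Icc (0 : ℝ) 1) :
    HasDerivAt (fun s => phase f s η)
      (f τ (τ - 1) - K Φ + K (phase f τ η) - f τ (τ - η)) τ := by
  refine (_root_.hasDerivAt_phase_tau hf.continuous hf.continuous_deriv hf.hasDerivAt τ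
    η).congr_deriv ?_
  rw [hf.phase_deriv hK hk hτ hη, hf.influx τ hτ]
  ring

theorem phase_one (hf : IsTransportDensity k (K 0 - K Φ) f f') (hK : ∀ x, HasDerivAt K (k x) x)
    (hk : Continuous k) {L : NNReal} (hlip : LipschitzWith L K) (h0 : phase f 0 1 = Φ)
    (hτ : 0 ≤ τ) : phase f τ 1 = Φ :=
  eq_const_of_hasDerivWithinAt_sub (y := fun s => phase f s 1) hlip (fun _ hs =>
    ((hf.hasDerivAt_phase_tau hK hk hs (right_mem_Icc.2 zero_le_one)).congr_deriv
      (by ring)).hasDerivWithinAt) h0 hτ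

theorem hasDerivAt_excess (hf : IsTransportDensity k (K 0 - K Φ) f f')
    (hK : ∀ x, HasDerivAt K (k x) x) (hk : Continuous k) (hτ : 0 ≤ τ)
    (hσ : τ - σ ∈ Icc (0 : ℝ) 1) :
    HasDerivAt (fun s => f s σ - K (phase f s (s - σ)))
      (k (phase f τ (τ - σ)) *
        (f τ σ - K (phase f τ (τ - σ)) - (f τ (τ - 1) - K Φ))) τ := by
  have hphase := hasDerivAt_phase_characteristic hf.continuous hf.continuous_deriv hf.hasDerivAt τ σ
  refine ((hf.hasDerivAt τ σ).sub ((hK _).comp τ hphase)).congr_deriv ?_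
  have hgrowth := hf.growth τ hτ _ hσ
  rw [sub_sub_cancel] at hgrowth
  rw [hgrowth, hf.phase_deriv hK hk hτ hσ, hf.influx τ hτ]
  ring

/-- Along a characteristic, `h = ∂η Q - K(Q)` satisfies `h' = k(Q) (h - 1/N)` with `k ≤ 0`, so that
`h` stays positive as long as `1/N` does. -/
theorem excess_pos (hf : IsTransportDensity k (K 0 - K Φ) f f') (hK : ∀ x, HasDerivAt K (k x) x)
    (hk : Continuous k) (hk₀ : ∀ x, k x ≤ 0) {s t : ℝ} (hs : 0 ≤ s) (hst : s ≤ t)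
    (hσs : σ ≤ s) (htσ : t ≤ σ + 1) (hout : ∀ r ∈ Ioo s t, 0 < f r (r - 1) - K Φ)
    (hstart : 0 < f s σ - K (phase f s (s - σ))) :
    0 < f t σ - K (phase f t (t - σ)) := by
  have hderiv : ∀ r ∈ Icc s t, HasDerivAt (fun x => -(f x σ - K (phase f x (x - σ)))) _ r :=
    fun r hr => (hf.hasDerivAt_excess hK hk (hs.trans hr.1)
      ⟨by linarith [hr.1], by linarith [hr.2]⟩).neg
  have hrate : Continuous fun r => k (phase f r (r - σ)) :=
    hk.comp (hf.continuous_phase.comp (f := fun r => (r, r - σ)) (by fun_prop))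
  have hgronwall := le_mul_exp_integral_of_deriv_le hst hrate hderiv fun r hr => by
    nlinarith [mul_nonpos_of_nonpos_of_nonneg (hk₀ (phase f r (r - σ))) (hout r hr).le]
  nlinarith [mul_pos hstart (exp_pos (∫ r in s..t, k (phase f r (r - σ))))]

theorem outflow_pos (hf : IsTransportDensity k (K 0 - K Φ) f f')
    (hK : ∀ x, HasDerivAt K (k x) x) (hk : Continuous k) (hk₀ : ∀ x, k x ≤ 0)
    (hone : ∀ t, 0 ≤ t → phase f t 1 = Φ)
    (hinit : ∀ η ∈ Icc (0 : ℝ) 1, 0 < f 0 (-η) - K (phase f 0 η)) (hτ : 0 ≤ τ) :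
    0 < f τ (τ - 1) - K Φ := by
  have hcont : Continuous fun t => f t (t - 1) - K Φ :=
    (hf.continuous.comp (f := fun t => (t, t - 1)) (by fun_prop)).sub continuous_const
  refine forall_pos_of_forall_Ico_pos hcont (fun t ht hpos => ?_) hτ
  have hend : phase f t (t - (t - 1)) = Φ := by rw [sub_sub_cancel, hone t ht]
  suffices 0 < f t (t - 1) - K (phase f t (t - (t - 1))) by rwa [hend] at this
  rcases le_total t 1 with h | h
  · refine hf.excess_pos hK hk hk₀ le_rfl ht (by linarith) (by linarith)
      (fun r hr => hpos r ⟨hr.1.le, hr.2⟩) ?_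
    simpa using hinit (1 - t) ⟨by linarith, by linarith⟩
  · refine hf.excess_pos hK hk hk₀ (s := t - 1) (by linarith) (by linarith) le_rfl (by linarith)
      (fun r hr => hpos r ⟨by linarith [hr.1], hr.2⟩) ?_
    rw [sub_self, phase_zero, hf.influx _ (by linarith)]
    linarith [hpos (t - 1) ⟨by linarith, by linarith⟩]

theorem pdEta_phase (hf : IsTransportDensity k c f f') (hη : η ∈ Icc (0 : ℝ) 1) :
    pdEta (phase f) τ η = f τ (τ - η) :=
  (hasDerivAt_phase_eta hf.continuous τ η).hasDerivWithinAt.derivWithin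
    (uniqueDiffOn_Icc zero_lt_one η hη)

theorem isQSol (hf : IsTransportDensity k (K 0 - K Φ) f f') (hK : ∀ x, HasDerivAt K (k x) x)
    (hk : Continuous k) {Qinit : ℝ → ℝ} (hA2 : A2 K Φ Qinit)
    (hinit : EqOn (phase f 0) Qinit (Icc 0 1)) (hout : ∀ t, 0 ≤ t → 0 < f t (t - 1) - K Φ) :
    IsQSol K Φ ⊤ Qinit (phase f) fun τ => 1 / (f τ (τ - 1) - K Φ) where
  initReg := hA2.reg
  initMono := hA2.mono
  init0 := hA2.init0
  init1 := hA2.init1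
  initDeriv := hA2.deriv1
  reg := (contDiff_phase hf.continuous hf.continuous_deriv hf.hasDerivAt).contDiffOn
  mono τ _ := (hf.monotone_phase τ).monotoneOn _
  Ncont := by
    refine continuousOn_const.div (Continuous.continuousOn ?_) fun τ hτ => (hout τ hτ.1).ne'
    exact (hf.continuous.comp (f := fun t => (t, t - 1)) (by fun_prop)).sub continuous_const
  Npos τ hτ := one_div_pos.2 (hout τ hτ.1)
  pde τ hτ η hη := by
    have hη' := Ioo_subset_Icc_self hη
    have hτderiv : pdTau (phase f) τ η = _ := (hf.hasDerivAt_phase_tau hK hk hτ.1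
      hη').hasDerivWithinAt.derivWithin (uniqueDiffOn_Ici 0 τ hτ.1)
    rw [hτderiv, hf.pdEta_phase hη', one_div_one_div]
    ring
  bc τ _ := phase_zero f τ
  Ndef τ _ := by rw [one_div_one_div, hf.pdEta_phase (right_mem_Icc.2 zero_le_one)]
  init := hinit
  constraint τ hτ := by
    rw [hf.pdEta_phase (right_mem_Icc.2 zero_le_one)]
    exact sub_pos.1 (hout τ hτ.1)

end IsTransportDensity

/-! ### A smoothed absolute value -/

section SmoothAbs

/-- A smooth approximation of `|x|` from above, within `ε`. -/
def smoothAbs (ε x : ℝ) : ℝ := √(x ^ 2 + ε ^ 2)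

/-- The derivative of `smoothAbs ε`, a smooth approximation of the sign of `x`. -/
def smoothSign (ε x : ℝ) : ℝ := x / smoothAbs ε x

variable {ε : ℝ}

theorem smoothAbs_pos (hε : 0 < ε) (x : ℝ) : 0 < smoothAbs ε x := sqrt_pos.2 (by positivity)

theorem abs_le_smoothAbs (ε x : ℝ) : |x| ≤ smoothAbs ε x :=
  abs_le_sqrt (le_add_of_nonneg_right (sq_nonneg ε))

theorem le_smoothAbs (ε x : ℝ) : ε ≤ smoothAbs ε x :=
  le_sqrt_of_sq_le (le_add_of_nonneg_left (sq_nonneg x))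

theorem smoothAbs_le (hε : 0 < ε) (x : ℝ) : smoothAbs ε x ≤ |x| + ε := by
  refine (sqrt_le_left (by positivity)).2 ?_
  nlinarith [abs_nonneg x, sq_abs x]

theorem continuous_smoothAbs (ε : ℝ) : Continuous (smoothAbs ε) := by
  unfold smoothAbs
  fun_prop

theorem continuous_smoothSign (hε : 0 < ε) : Continuous (smoothSign ε) :=
  continuous_id.div (continuous_smoothAbs ε) fun x => (smoothAbs_pos hε x).ne'

theorem hasDerivAt_smoothAbs (hε : 0 < ε) (x : ℝ) :
    HasDerivAt (smoothAbs ε) (smoothSign ε x) x := by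
  have hpos : 0 < x ^ 2 + ε ^ 2 := by positivity
  refine ((((hasDerivAt_id x).pow 2).add_const (ε ^ 2)).sqrt hpos.ne').congr_deriv ?_
  simp [smoothSign, smoothAbs, mul_div_mul_left]

theorem abs_smoothSign_le_one (hε : 0 < ε) (x : ℝ) : |smoothSign ε x| ≤ 1 := by
  rw [smoothSign, abs_div, abs_of_pos (smoothAbs_pos hε x), div_le_one (smoothAbs_pos hε x)]
  exact abs_le_smoothAbs ε x

theorem smoothAbs_sub_smoothSign_mul_le (hε : 0 < ε) (x : ℝ) :
    smoothAbs ε x - smoothSign ε x * x ≤ ε := by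
  have hpos := smoothAbs_pos hε x
  have hsq : smoothAbs ε x ^ 2 = x ^ 2 + ε ^ 2 := sq_sqrt (by positivity)
  have heq : smoothAbs ε x - smoothSign ε x * x = ε ^ 2 / smoothAbs ε x := by
    rw [smoothSign, eq_div_iff hpos.ne', sub_mul]
    field_simp
    linarith
  rw [heq, div_le_iff₀ hpos, sq]
  exact mul_le_mul_of_nonneg_left (le_smoothAbs ε x) hε.le

theorem tendsto_smoothSign (x : ℝ) : Tendsto (fun ε => smoothSign ε x) (𝓝 0) (𝓝 (Real.sign x)) := by
  rcases eq_or_ne x 0 with rfl | hx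
  · simp [smoothSign]
  have hzero : smoothAbs 0 x = |x| := by simp [smoothAbs, sqrt_sq_eq_abs]
  have hcont : ContinuousAt (fun ε => smoothSign ε x) 0 := by
    unfold smoothSign smoothAbs
    exact continuousAt_const.div (by fun_prop) (by simp [sqrt_sq_eq_abs, hx])
  have hsign : Real.sign x = smoothSign 0 x := by
    rw [smoothSign, hzero]
    rcases hx.lt_or_gt with h | h
    · rw [Real.sign_of_neg h, abs_of_neg h, div_neg, div_self hx]
    · rw [Real.sign_of_pos h, abs_of_pos h, div_self hx]
  exact hsign ▸ hcont

end SmoothAbs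

section Sign

theorem abs_sign_le_one (x : ℝ) : |Real.sign x| ≤ 1 := by
  rcases Real.sign_apply_eq x with h | h | h <;> simp [h]

theorem measurable_sign : Measurable Real.sign := by
  unfold Real.sign
  exact Measurable.ite measurableSet_Iio measurable_const
    (Measurable.ite measurableSet_Ioi measurable_const measurable_const)

theorem intervalIntegrable_sign_mul {Y w : ℝ → ℝ} (hY : Continuous Y) (hw : Continuous w)
    (a b : ℝ) : IntervalIntegrable (fun x => Real.sign (Y x) * w x) volume a b := by
  refine (hw.intervalIntegrable a b).mono_fun
    ((measurable_sign.comp hY.measurable).mul hw.measurable).aestronglyMeasurable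
    (Eventually.of_forall fun x => ?_)
  simp only [norm_mul]
  exact mul_le_of_le_one_left (norm_nonneg _) (abs_sign_le_one _)

theorem integral_sign_mul_deriv_eq_zero {Y Y' : ℝ → ℝ} {a b : ℝ}
    (hY : ∀ x, HasDerivAt Y (Y' x) x) (hY' : Continuous Y') (ha : Y a = 0) (hb : Y b = 0) :
    ∫ x in a..b, Real.sign (Y x) * Y' x = 0 := by
  have hYc : Continuous Y := continuous_iff_continuousAt.2 fun x => (hY x).continuousAt
  have hcont : ∀ ε > 0, Continuous fun x => smoothSign ε (Y x) * Y' x := fun ε hε =>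
    ((continuous_smoothSign hε).comp hYc).mul hY'
  have hzero : ∀ ε > 0, ∫ x in a..b, smoothSign ε (Y x) * Y' x = 0 := fun ε hε => by
    rw [intervalIntegral.integral_eq_sub_of_hasDerivAt
      (fun x _ => (hasDerivAt_smoothAbs hε (Y x)).comp x (hY x))
      ((hcont ε hε).intervalIntegrable _ _)]
    simp [ha, hb]
  have hlim : Tendsto (fun ε => ∫ x in a..b, smoothSign ε (Y x) * Y' x) (𝓝[>] 0)
      (𝓝 (∫ x in a..b, Real.sign (Y x) * Y' x)) := by
    refine intervalIntegral.tendsto_integral_filter_of_dominated_convergence (fun x => |Y' x|)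
      (eventually_mem_nhdsWithin.mono fun ε hε => (hcont ε hε).aestronglyMeasurable)
      (eventually_mem_nhdsWithin.mono fun ε hε => Eventually.of_forall fun x _ => ?_)
      (hY'.abs.intervalIntegrable _ _) (Eventually.of_forall fun x _ =>
        ((tendsto_smoothSign (Y x)).mono_left nhdsWithin_le_nhds).mul_const _)
    rw [norm_mul]
    exact mul_le_of_le_one_left (norm_nonneg _) (abs_smoothSign_le_one hε _)
  exact tendsto_nhds_unique hlim
    (tendsto_const_nhds.congr' (eventually_mem_nhdsWithin.mono fun ε hε => (hzero ε hε).symm))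

variable {α : ℝ → ℝ} {s : Set ℝ} {x y : ℝ}

theorem integral_pos_or_eq_zero_of_lt [s.OrdConnected] (hα : Continuous α)
    (hnonneg : ∀ z ∈ s, 0 ≤ α z) (hx : x ∈ s) (hy : y ∈ s) (hxy : x < y) :
    0 < ∫ z in x..y, α z ∨ α x = 0 ∧ α y = 0 := by
  have hsub : Icc x y ⊆ s := Set.Icc_subset s hx hy
  by_cases h : ∃ z ∈ Icc x y, 0 < α z
  · exact Or.inl (intervalIntegral.integral_pos hxy hα.continuousOn
      (fun z hz => hnonneg z (hsub (Ioc_subset_Icc_self hz))) h)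
  · push Not at h
    exact Or.inr ⟨(h x (left_mem_Icc.2 hxy.le)).antisymm (hnonneg x hx),
      (h y (right_mem_Icc.2 hxy.le)).antisymm (hnonneg y hy)⟩

theorem sign_integral_mul_sub [s.OrdConnected] (hα : Continuous α)
    (hnonneg : ∀ z ∈ s, 0 ≤ α z) (hx : x ∈ s) (hy : y ∈ s) :
    Real.sign (∫ z in y..x, α z) * (α x - α y) = Real.sign (x - y) * (α x - α y) := by
  rcases lt_trichotomy x y with h | rfl | h
  · rcases integral_pos_or_eq_zero_of_lt hα hnonneg hx hy h with hpos | ⟨hαx, hαy⟩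
    · rw [intervalIntegral.integral_symm, Real.sign_of_neg (by linarith),
        Real.sign_of_neg (by linarith)]
    · simp [hαx, hαy]
  · simp
  · rcases integral_pos_or_eq_zero_of_lt hα hnonneg hy hx h with hpos | ⟨hαy, hαx⟩
    · rw [Real.sign_of_pos hpos, Real.sign_of_pos (by linarith)]
    · simp [hαx, hαy]

theorem sign_sub_mul_sub_of_monotoneOn (hα : MonotoneOn α s) (hx : x ∈ s) (hy : y ∈ s) :
    Real.sign (x - y) * (α x - α y) = |α x - α y| := by
  rcases lt_trichotomy x y with h | rfl | h
  · rw [Real.sign_of_neg (by linarith), abs_of_nonpos (sub_nonpos.2 (hα hx hy h.le))]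
    ring
  · simp
  · rw [Real.sign_of_pos (by linarith), abs_of_nonneg (sub_nonneg.2 (hα hy hx h.le)), one_mul]

theorem sign_sub_mul_sub_of_antitoneOn (hα : AntitoneOn α s) (hx : x ∈ s) (hy : y ∈ s) :
    Real.sign (x - y) * (α x - α y) = -|α x - α y| := by
  have h := sign_sub_mul_sub_of_monotoneOn hα.neg hx hy
  rw [← abs_neg (α x - α y)]
  simp only [neg_sub_neg] at h
  rw [neg_sub, ← h]
  ring

end Sign

/-! ### The sign of the growth term -/

/-- `Q` is a phase profile rising from `0` at `η = 0` to `Φ` at `η = 1`, with continuous density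
`p ≥ 0`. -/
structure IsProfile (Φ : ℝ) (Q p : ℝ → ℝ) : Prop where
  continuous_density : Continuous p
  hasDerivAt : ∀ x, HasDerivAt Q (p x) x
  zero : Q 0 = 0
  one : Q 1 = Φ
  nonneg : ∀ x, 0 ≤ p x

namespace IsProfile

variable {Q p : ℝ → ℝ} {Φ : ℝ}

theorem continuous (h : IsProfile Φ Q p) : Continuous Q :=
  continuous_iff_continuousAt.2 fun x => (h.hasDerivAt x).continuousAt

theorem mem_Icc (h : IsProfile Φ Q p) {x : ℝ} (hx : x ∈ Icc (0 : ℝ) 1) : Q x ∈ Icc 0 Φ := by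
  have hmono : Monotone Q := monotone_of_hasDerivAt_nonneg h.hasDerivAt h.nonneg
  exact ⟨h.zero ▸ hmono hx.1, h.one ▸ hmono hx.2⟩

end IsProfile

/-- A decomposition `k = κ - α - β` on `[0, Φ]` into an upper bound `κ` and two nonnegative losses,
one antitone and one monotone. -/
structure IsMonotoneSplitting (Φ κ : ℝ) (k α β : ℝ → ℝ) : Prop where
  continuous_anti : Continuous α
  continuous_mono : Continuous β
  eq : ∀ φ ∈ Icc 0 Φ, k φ = κ - α φ - β φ
  anti_nonneg : ∀ φ ∈ Icc 0 Φ, 0 ≤ α φ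
  mono_nonneg : ∀ φ ∈ Icc 0 Φ, 0 ≤ β φ
  antitoneOn : AntitoneOn α (Icc 0 Φ)
  monotoneOn : MonotoneOn β (Icc 0 Φ)

theorem IsMonotoneSplitting.le {Φ κ φ : ℝ} {k α β : ℝ → ℝ} (h : IsMonotoneSplitting Φ κ k α β)
    (hφ : φ ∈ Icc 0 Φ) : k φ ≤ κ := by
  linarith [h.eq φ hφ, h.anti_nonneg φ hφ, h.mono_nonneg φ hφ]

theorem IsMonotoneSplitting.congr {Φ κ : ℝ} {k k' α β : ℝ → ℝ}
    (h : IsMonotoneSplitting Φ κ k α β) (hk : EqOn k' k (Icc 0 Φ)) :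
    IsMonotoneSplitting Φ κ k' α β :=
  { h with eq := fun φ hφ => (hk hφ).trans (h.eq φ hφ) }

section SpatialEstimate

variable {Q₁ Q₂ p₁ p₂ k α β : ℝ → ℝ} {Φ C κ ε : ℝ}

theorem hasDerivAt_integral_between_profiles (h₁ : IsProfile Φ Q₁ p₁) (h₂ : IsProfile Φ Q₂ p₂)
    (hα : Continuous α) (x : ℝ) :
    HasDerivAt (fun y => ∫ z in Q₂ y..Q₁ y, α z) (α (Q₁ x) * p₁ x - α (Q₂ x) * p₂ x) x := by
  have hprim : ∀ {Q p : ℝ → ℝ}, IsProfile Φ Q p →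
      HasDerivAt (fun y => ∫ z in (0 : ℝ)..Q y, α z) (α (Q x) * p x) x := fun h =>
    (hα.integral_hasStrictDerivAt 0 _).hasDerivAt.comp x (h.hasDerivAt x)
  refine ((hprim h₁).sub (hprim h₂)).congr_of_eventuallyEq (Eventually.of_forall fun y => ?_)
  exact (intervalIntegral.integral_interval_sub_left (hα.intervalIntegrable _ _)
    (hα.intervalIntegrable _ _)).symm

theorem continuous_flux_sub (h₁ : IsProfile Φ Q₁ p₁) (h₂ : IsProfile Φ Q₂ p₂)
    (hα : Continuous α) : Continuous fun x => α (Q₁ x) * p₁ x - α (Q₂ x) * p₂ x :=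
  ((hα.comp h₁.continuous).mul h₁.continuous_density).sub
    ((hα.comp h₂.continuous).mul h₂.continuous_density)

theorem integral_sign_mul_flux_eq_zero (h₁ : IsProfile Φ Q₁ p₁) (h₂ : IsProfile Φ Q₂ p₂)
    (hα : Continuous α) :
    ∫ x in (0 : ℝ)..1,
      Real.sign (∫ z in Q₂ x..Q₁ x, α z) * (α (Q₁ x) * p₁ x - α (Q₂ x) * p₂ x) = 0 :=
  integral_sign_mul_deriv_eq_zero (hasDerivAt_integral_between_profiles h₁ h₂ hα)
    (continuous_flux_sub h₁ h₂ hα) (by simp [h₁.zero, h₂.zero]) (by simp [h₁.one, h₂.one])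

theorem mul_flux_sub_le {a₁ a₂ p₁ p₂ e s : ℝ} (ha : a₁ ∈ Icc 0 C) (hp : 0 ≤ p₂) (he : |e| ≤ 1)
    (hea : e * (a₁ - a₂) = -|a₁ - a₂|) (hs : |s| ≤ 1) (hε : 0 ≤ ε)
    (hsp : |p₁ - p₂| - s * (p₁ - p₂) ≤ ε) :
    e * (a₁ * p₁ - a₂ * p₂) - C * ε ≤ s * (a₁ * p₁ - a₂ * p₂) := by
  have hcontract : ∀ t x : ℝ, |t| ≤ 1 → |t * x| ≤ |x| := fun t x ht => by
    rw [abs_mul]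
    exact mul_le_of_le_one_left (abs_nonneg x) ht
  have hdensity : e * (p₁ - p₂) - s * (p₁ - p₂) ≤ ε := by
    linarith [le_of_abs_le (hcontract e (p₁ - p₂) he)]
  have hrate : 0 ≤ (s - e) * (a₁ - a₂) := by
    linarith [neg_le_of_abs_le (hcontract s (a₁ - a₂) hs)]
  calc e * (a₁ * p₁ - a₂ * p₂) - C * ε
      ≤ e * (a₁ * p₁ - a₂ * p₂) - a₁ * ε + p₂ * ((s - e) * (a₁ - a₂)) := by
        linarith [mul_le_mul_of_nonneg_right ha.2 hε, mul_nonneg hp hrate]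
    _ ≤ s * (a₁ * p₁ - a₂ * p₂) := by linarith [mul_le_mul_of_nonneg_left hdensity ha.1]

/-- The sign `θ` is `1` for antitone `α` and `-1` for monotone `α`: in both cases `θ` times the
sign of `Q₁ - Q₂` has zero average against the flux difference and is opposite to the sign of
`α(Q₁) - α(Q₂)`. -/
theorem neg_mul_le_integral_smoothSign_mul_flux (h₁ : IsProfile Φ Q₁ p₁) (h₂ : IsProfile Φ Q₂ p₂)
    (hα : Continuous α) (hαC : ∀ φ ∈ Icc 0 Φ, α φ ∈ Icc 0 C) {θ : ℝ} (hθ : |θ| ≤ 1)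
    (hsign : ∀ x ∈ Icc 0 Φ, ∀ y ∈ Icc 0 Φ,
      θ * (Real.sign (x - y) * (α x - α y)) = -|α x - α y|) (hε : 0 < ε) :
    -(C * ε) ≤ ∫ x in (0 : ℝ)..1,
      smoothSign ε (p₁ x - p₂ x) * (α (Q₁ x) * p₁ x - α (Q₂ x) * p₂ x) := by
  set e : ℝ → ℝ := fun x => Real.sign (∫ z in Q₂ x..Q₁ x, α z)
  set flux : ℝ → ℝ := fun x => α (Q₁ x) * p₁ x - α (Q₂ x) * p₂ x
  have hflux : Continuous flux := continuous_flux_sub h₁ h₂ hα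
  have hprim : Continuous fun x => ∫ z in Q₂ x..Q₁ x, α z := continuous_iff_continuousAt.2 fun x =>
    (hasDerivAt_integral_between_profiles h₁ h₂ hα x).continuousAt
  have hint := (intervalIntegrable_sign_mul hprim hflux 0 1).const_mul θ
  have hle : ∫ x in (0 : ℝ)..1, (θ * (e x * flux x) - C * ε) ≤
      ∫ x in (0 : ℝ)..1, smoothSign ε (p₁ x - p₂ x) * flux x := by
    refine intervalIntegral.integral_mono_on zero_le_one
      (hint.sub intervalIntegrable_const) ((((continuous_smoothSign hε).comp
        (h₁.continuous_density.sub h₂.continuous_density)).mul hflux).intervalIntegrable _ _)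
      fun x hx => ?_
    have hQ₁ := h₁.mem_Icc hx
    have hQ₂ := h₂.mem_Icc hx
    rw [← mul_assoc]
    refine mul_flux_sub_le (hαC _ hQ₁) (h₂.nonneg x) ?_ ?_ (abs_smoothSign_le_one hε _) hε.le ?_
    · rw [abs_mul]
      exact mul_le_one₀ hθ (abs_nonneg _) (abs_sign_le_one _)
    · rw [mul_assoc, sign_integral_mul_sub hα (fun φ hφ => (hαC φ hφ).1) hQ₁ hQ₂,
        hsign _ hQ₁ _ hQ₂]
    · linarith [abs_le_smoothAbs ε (p₁ x - p₂ x), smoothAbs_sub_smoothSign_mul_le hε (p₁ x - p₂ x)]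
  rw [intervalIntegral.integral_sub hint intervalIntegrable_const,
    intervalIntegral.integral_const_mul, integral_sign_mul_flux_eq_zero h₁ h₂ hα] at hle
  simpa using hle

theorem integral_smoothSign_mul_growth_eq (h₁ : IsProfile Φ Q₁ p₁) (h₂ : IsProfile Φ Q₂ p₂)
    (hk : IsMonotoneSplitting Φ κ k α β) (hε : 0 < ε) :
    ∫ x in (0 : ℝ)..1, smoothSign ε (p₁ x - p₂ x) * (k (Q₁ x) * p₁ x - k (Q₂ x) * p₂ x) =
      κ * (∫ x in (0 : ℝ)..1, smoothSign ε (p₁ x - p₂ x) * (p₁ x - p₂ x)) -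
      (∫ x in (0 : ℝ)..1, smoothSign ε (p₁ x - p₂ x) * (α (Q₁ x) * p₁ x - α (Q₂ x) * p₂ x)) -
      ∫ x in (0 : ℝ)..1, smoothSign ε (p₁ x - p₂ x) * (β (Q₁ x) * p₁ x - β (Q₂ x) * p₂ x) := by
  have hdiff : Continuous fun x => p₁ x - p₂ x :=
    h₁.continuous_density.sub h₂.continuous_density
  have hint : ∀ w : ℝ → ℝ, Continuous w → IntervalIntegrable
      (fun x => smoothSign ε (p₁ x - p₂ x) * w x) volume 0 1 := fun w hw =>
    (((continuous_smoothSign hε).comp hdiff).mul hw).intervalIntegrable _ _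
  have hint₀ := (hint _ hdiff).const_mul κ
  have hintα := hint _ (continuous_flux_sub h₁ h₂ hk.continuous_anti)
  have hintβ := hint _ (continuous_flux_sub h₁ h₂ hk.continuous_mono)
  rw [← intervalIntegral.integral_const_mul, ← intervalIntegral.integral_sub hint₀ hintα,
    ← intervalIntegral.integral_sub (hint₀.sub hintα) hintβ]
  refine intervalIntegral.integral_congr fun x hx => ?_
  rw [uIcc_of_le zero_le_one] at hx
  simp only [hk.eq _ (h₁.mem_Icc hx), hk.eq _ (h₂.mem_Icc hx)]
  ring

theorem integral_smoothAbs_sub_le (h₁ : IsProfile Φ Q₁ p₁) (h₂ : IsProfile Φ Q₂ p₂)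
    (hε : 0 < ε) :
    (∫ x in (0 : ℝ)..1, smoothAbs ε (p₁ x - p₂ x)) - ε ≤
      ∫ x in (0 : ℝ)..1, smoothSign ε (p₁ x - p₂ x) * (p₁ x - p₂ x) := by
  have hdiff := h₁.continuous_density.sub h₂.continuous_density
  have habs : Continuous fun x => smoothAbs ε (p₁ x - p₂ x) := (continuous_smoothAbs ε).comp hdiff
  have hsign : Continuous fun x => smoothSign ε (p₁ x - p₂ x) * (p₁ x - p₂ x) :=
    ((continuous_smoothSign hε).comp hdiff).mul hdiff
  have h := intervalIntegral.integral_mono (μ := volume) zero_le_one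
    ((habs.intervalIntegrable 0 1).sub intervalIntegrable_const) (hsign.intervalIntegrable _ _)
    fun x => sub_le_comm.1 (smoothAbs_sub_smoothSign_mul_le hε (p₁ x - p₂ x))
  rw [intervalIntegral.integral_sub (habs.intervalIntegrable _ _) intervalIntegrable_const] at h
  simpa using h

theorem integral_smoothSign_mul_growth_le (h₁ : IsProfile Φ Q₁ p₁) (h₂ : IsProfile Φ Q₂ p₂)
    (hk : IsMonotoneSplitting Φ κ k α β) (hκ : κ ≤ 0) (hε : 0 < ε) :
    ∫ x in (0 : ℝ)..1, smoothSign ε (p₁ x - p₂ x) * (k (Q₁ x) * p₁ x - k (Q₂ x) * p₂ x) ≤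
      κ * (∫ x in (0 : ℝ)..1, smoothAbs ε (p₁ x - p₂ x)) + (α 0 + β Φ - κ) * ε := by
  have hΦ : 0 ≤ Φ := by simpa [h₁.one] using (h₁.mem_Icc (right_mem_Icc.2 zero_le_one)).1
  have hanti := neg_mul_le_integral_smoothSign_mul_flux h₁ h₂ hk.continuous_anti (θ := 1)
    (fun φ hφ => ⟨hk.anti_nonneg φ hφ, hk.antitoneOn (left_mem_Icc.2 hΦ) hφ hφ.1⟩) (by simp)
    (fun x hx y hy => by rw [sign_sub_mul_sub_of_antitoneOn hk.antitoneOn hx hy, one_mul]) hε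
  have hmono := neg_mul_le_integral_smoothSign_mul_flux h₁ h₂ hk.continuous_mono (θ := -1)
    (fun φ hφ => ⟨hk.mono_nonneg φ hφ, hk.monotoneOn hφ (right_mem_Icc.2 hΦ) hφ.2⟩) (by simp)
    (fun x hx y hy => by rw [sign_sub_mul_sub_of_monotoneOn hk.monotoneOn hx hy, neg_one_mul]) hε
  have habs := integral_smoothAbs_sub_le h₁ h₂ hε
  rw [integral_smoothSign_mul_growth_eq h₁ h₂ hk hε]
  nlinarith [mul_le_mul_of_nonpos_left habs hκ]

end SpatialEstimate

/-! ### Contraction of densities -/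

namespace IsTransportDensity

variable {k α β : ℝ → ℝ} {c Φ κ ε τ : ℝ} {f f' g g' : ℝ → ℝ → ℝ}

theorem isProfile_phase (hf : IsTransportDensity k c f f') (hone : phase f τ 1 = Φ) :
    IsProfile Φ (phase f τ) fun x => f τ (τ - x) where
  continuous_density := (hf.continuous.uncurry_left τ).comp (continuous_sub_left τ)
  hasDerivAt := hasDerivAt_phase_eta hf.continuous τ
  zero := phase_zero f τ
  one := hone
  nonneg _ := hf.nonneg _ _

theorem hasDerivAt_phase_smoothAbs_sub (hf : IsTransportDensity k c f f')
    (hg : IsTransportDensity k c g g') (hε : 0 < ε) (hτ : 0 ≤ τ) :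
    HasDerivAt (fun t => phase (fun s σ => smoothAbs ε (f s σ - g s σ)) t 1)
      (∫ x in (0 : ℝ)..1, smoothSign ε (f τ (τ - x) - g τ (τ - x)) *
        (k (phase f τ x) * f τ (τ - x) - k (phase g τ x) * g τ (τ - x))) τ := by
  have hdiff := hf.continuous.sub hg.continuous
  refine (_root_.hasDerivAt_phase_tau (f := fun s σ => smoothAbs ε (f s σ - g s σ))
    (f' := fun s σ => smoothSign ε (f s σ - g s σ) * (f' s σ - g' s σ))
    ((continuous_smoothAbs ε).comp hdiff) (((continuous_smoothSign hε).comp hdiff).mul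
      (hf.continuous_deriv.sub hg.continuous_deriv)) (fun s σ =>
        (hasDerivAt_smoothAbs hε _).comp s ((hf.hasDerivAt s σ).sub (hg.hasDerivAt s σ)))
    τ 1).congr_deriv ?_
  rw [hf.influx τ hτ, hg.influx τ hτ, add_sub_add_right_eq_sub, sub_self, zero_add,
    phase_eq_integral]
  refine intervalIntegral.integral_congr fun x hx => ?_
  rw [uIcc_of_le zero_le_one] at hx
  simp only [hf.growth τ hτ x hx, hg.growth τ hτ x hx]

theorem phase_smoothAbs_sub_le (hf : IsTransportDensity k c f f')
    (hg : IsTransportDensity k c g g') (hfone : ∀ t, 0 ≤ t → phase f t 1 = Φ)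
    (hgone : ∀ t, 0 ≤ t → phase g t 1 = Φ) (hk : IsMonotoneSplitting Φ κ k α β) (hκ : κ ≤ 0)
    (hε : 0 < ε) (hτ : 0 ≤ τ) :
    phase (fun s σ => smoothAbs ε (f s σ - g s σ)) τ 1 ≤
      phase (fun s σ => smoothAbs ε (f s σ - g s σ)) 0 1 * exp (κ * τ) +
        (α 0 + β Φ - κ) * ε * τ := by
  set J : ℝ → ℝ := fun t => phase (fun s σ => smoothAbs ε (f s σ - g s σ)) t 1
  set A := (α 0 + β Φ - κ) * ε
  have hΦ : Φ ∈ Icc 0 Φ := by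
    have h := (hf.isProfile_phase (hfone 0 le_rfl)).mem_Icc (right_mem_Icc.2 zero_le_one)
    rwa [hfone 0 le_rfl] at h
  have hA : 0 ≤ A := by
    have := hk.anti_nonneg 0 (left_mem_Icc.2 hΦ.1)
    exact mul_nonneg (by linarith [hk.mono_nonneg Φ hΦ]) hε.le
  have hgronwall := le_mul_exp_integral_of_deriv_le (y := fun t => J t - A * t) (b := fun _ => κ)
    hτ continuous_const (fun t ht => (hf.hasDerivAt_phase_smoothAbs_sub hg hε ht.1).sub
      ((hasDerivAt_id t).const_mul A)) fun t ht => by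
    have h := integral_smoothSign_mul_growth_le (hf.isProfile_phase (hfone t ht.1.le))
      (hg.isProfile_phase (hgone t ht.1.le)) hk hκ hε
    rw [← phase_eq_integral (fun s σ => smoothAbs ε (f s σ - g s σ))] at h
    nlinarith [mul_nonneg hA ht.1.le]
  simp only [mul_zero, sub_zero, intervalIntegral.integral_const, smul_eq_mul] at hgronwall
  rw [mul_comm κ τ]
  linarith

theorem integral_abs_sub_le (hf : IsTransportDensity k c f f') (hg : IsTransportDensity k c g g')
    (hfone : ∀ t, 0 ≤ t → phase f t 1 = Φ) (hgone : ∀ t, 0 ≤ t → phase g t 1 = Φ)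
    (hk : IsMonotoneSplitting Φ κ k α β) (hκ : κ ≤ 0) (hτ : 0 ≤ τ) :
    ∫ x in (0 : ℝ)..1, |f τ (τ - x) - g τ (τ - x)| ≤
      exp (κ * τ) * ∫ x in (0 : ℝ)..1, |f 0 (0 - x) - g 0 (0 - x)| := by
  have hdiff : ∀ t, Continuous fun x => f t (t - x) - g t (t - x) := fun t =>
    ((hf.continuous.uncurry_left t).comp (continuous_sub_left t)).sub
      ((hg.continuous.uncurry_left t).comp (continuous_sub_left t))
  have hsmooth : ∀ ε t, IntervalIntegrable (fun x => smoothAbs ε (f t (t - x) - g t (t - x)))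
      volume 0 1 := fun ε t => ((continuous_smoothAbs ε).comp (hdiff t)).intervalIntegrable _ _
  have hint : ∀ t, IntervalIntegrable (fun x => |f t (t - x) - g t (t - x)|) volume 0 1 :=
    fun t => (hdiff t).abs.intervalIntegrable _ _
  have hlower : ∀ ε t, ∫ x in (0 : ℝ)..1, |f t (t - x) - g t (t - x)| ≤
      phase (fun s σ => smoothAbs ε (f s σ - g s σ)) t 1 := fun ε t => by
    rw [phase_eq_integral]
    exact intervalIntegral.integral_mono zero_le_one (hint t) (hsmooth ε t)
      fun x => abs_le_smoothAbs ε _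
  have hupper : ∀ ε > 0, ∀ t, phase (fun s σ => smoothAbs ε (f s σ - g s σ)) t 1 ≤
      (∫ x in (0 : ℝ)..1, |f t (t - x) - g t (t - x)|) + ε := fun ε hε t => by
    have h := intervalIntegral.integral_mono zero_le_one (hsmooth ε t)
      ((hint t).add intervalIntegrable_const) fun x => smoothAbs_le hε _
    rw [intervalIntegral.integral_add (hint t) intervalIntegrable_const] at h
    rw [phase_eq_integral]
    simpa using h
  set L : ℝ → ℝ := fun t => ∫ x in (0 : ℝ)..1, |f t (t - x) - g t (t - x)|
  have hlim : Tendsto (fun ε => exp (κ * τ) * (L 0 + ε) + (α 0 + β Φ - κ) * ε * τ) (𝓝[>] 0)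
      (𝓝 (exp (κ * τ) * L 0)) :=
    (Continuous.tendsto' (by fun_prop) 0 _ (by simp)).mono_left nhdsWithin_le_nhds
  refine ge_of_tendsto hlim (eventually_mem_nhdsWithin.mono fun ε hε => ?_)
  have hdecay := hf.phase_smoothAbs_sub_le hg hfone hgone hk hκ hε hτ
  nlinarith [hlower ε τ, mul_le_mul_of_nonneg_left (hupper ε hε 0) (exp_pos (κ * τ)).le]

end IsTransportDensity

/-! ### Uniqueness of classical solutions -/

theorem Ico0_top : Ico0 ⊤ = Ici 0 := by
  ext τ
  simp [Ico0]

theorem exists_hasDerivWithinAt_Ici {g : ℝ → ℝ} (hg : ContinuousOn g (Ici 0)) :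
    ∃ M : ℝ → ℝ, ∀ t, 0 ≤ t → HasDerivWithinAt M (g t) (Ici 0) t := by
  have hcont : Continuous fun t => g (max t 0) :=
    hg.comp_continuous (by fun_prop) fun t => le_max_right t 0
  refine ⟨fun t => ∫ s in (0 : ℝ)..t, g (max s 0), fun t ht => ?_⟩
  simpa only [max_eq_left ht] using
    (hcont.integral_hasStrictDerivAt 0 t).hasDerivAt.hasDerivWithinAt

namespace IsQSol

variable {K K' Qinit N N₁ N₂ M : ℝ → ℝ} {Q Q₁ Q₂ : ℝ → ℝ → ℝ} {Φ t₀ δ W τ η : ℝ} {L : NNReal}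

theorem contDiffOn (h : IsQSol K Φ ⊤ Qinit Q N) :
    ContDiffOn ℝ 1 (Function.uncurry Q) (Ici 0 ×ˢ Icc 0 1) :=
  Ico0_top ▸ h.reg

theorem continuousOn_one_div (h : IsQSol K Φ ⊤ Qinit Q N) :
    ContinuousOn (fun τ => 1 / N τ) (Ici 0) :=
  Ico0_top ▸ continuousOn_const.div h.Ncont fun τ hτ => (h.Npos τ hτ).ne'

theorem hasFDerivWithinAt (h : IsQSol K Φ ⊤ Qinit Q N) (hτ : 0 ≤ τ) (hη : η ∈ Icc (0 : ℝ) 1) :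
    HasFDerivWithinAt (Function.uncurry Q)
      (fderivWithin ℝ (Function.uncurry Q) (Ici 0 ×ˢ Icc 0 1) (τ, η)) (Ici 0 ×ˢ Icc 0 1)
      (τ, η) :=
  (h.contDiffOn.differentiableOn one_ne_zero (τ, η) ⟨hτ, hη⟩).hasFDerivWithinAt

theorem hasDerivWithinAt_tau (h : IsQSol K Φ ⊤ Qinit Q N) (hτ : 0 ≤ τ)
    (hη : η ∈ Icc (0 : ℝ) 1) :
    HasDerivWithinAt (fun t => Q t η)
      (fderivWithin ℝ (Function.uncurry Q) (Ici 0 ×ˢ Icc 0 1) (τ, η) (1, 0)) (Ici 0) τ := by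
  have hcurve : HasDerivWithinAt (fun t : ℝ => (t, η)) (1, 0) (Ici 0) τ :=
    (hasDerivWithinAt_id τ _).prodMk (hasDerivWithinAt_const τ _ η)
  exact (h.hasFDerivWithinAt hτ hη).comp_hasDerivWithinAt τ hcurve fun _ ht =>
    mk_mem_prod ht hη

theorem hasDerivWithinAt_eta (h : IsQSol K Φ ⊤ Qinit Q N) (hτ : 0 ≤ τ)
    (hη : η ∈ Icc (0 : ℝ) 1) :
    HasDerivWithinAt (Q τ)
      (fderivWithin ℝ (Function.uncurry Q) (Ici 0 ×ˢ Icc 0 1) (τ, η) (0, 1)) (Icc 0 1) η := by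
  have hcurve : HasDerivWithinAt (fun x : ℝ => (τ, x)) (0, 1) (Icc 0 1) η :=
    (hasDerivWithinAt_const η _ τ).prodMk (hasDerivWithinAt_id η _)
  exact (h.hasFDerivWithinAt hτ hη).comp_hasDerivWithinAt η hcurve fun _ hx => ⟨hτ, hx⟩

theorem fderivWithin_characteristic_eq_pdTau_add_pdEta (h : IsQSol K Φ ⊤ Qinit Q N)
    (hτ : 0 ≤ τ) (hη : η ∈ Icc (0 : ℝ) 1) :
    fderivWithin ℝ (Function.uncurry Q) (Ici 0 ×ˢ Icc 0 1) (τ, η) (1, 1) =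
      pdTau Q τ η + pdEta Q τ η := by
  rw [pdTau, pdEta, (h.hasDerivWithinAt_tau hτ hη).derivWithin (uniqueDiffOn_Ici 0 τ hτ),
    (h.hasDerivWithinAt_eta hτ hη).derivWithin (uniqueDiffOn_Icc zero_lt_one η hη), ← map_add]
  simp

theorem fderivWithin_characteristic (h : IsQSol K Φ ⊤ Qinit Q N) (hK : Continuous K)
    (hτ : 0 ≤ τ) (hη : η ∈ Icc (0 : ℝ) 1) :
    fderivWithin ℝ (Function.uncurry Q) (Ici 0 ×ˢ Icc 0 1) (τ, η) (1, 1) =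
      1 / N τ + K (Q τ η) := by
  have hslice : ContinuousOn (fun x : ℝ => (τ, x)) (Icc 0 1) := by fun_prop
  have hmaps : MapsTo (fun x : ℝ => (τ, x)) (Icc 0 1) (Ici 0 ×ˢ Icc 0 1) := fun x hx => ⟨hτ, hx⟩
  have hfderiv := h.contDiffOn.continuousOn_fderivWithin
    ((uniqueDiffOn_Ici 0).prod (uniqueDiffOn_Icc zero_lt_one)) le_rfl
  have hinterior : EqOn
      (fun x => fderivWithin ℝ (Function.uncurry Q) (Ici 0 ×ˢ Icc 0 1) (τ, x) (1, 1))
      (fun x => 1 / N τ + K (Q τ x)) (Ioo 0 1) := fun x hx => by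
    simp only
    rw [h.fderivWithin_characteristic_eq_pdTau_add_pdEta hτ (Ioo_subset_Icc_self hx),
      h.pde τ (Ico0_top ▸ hτ) x hx]
  refine hinterior.of_subset_closure ((hfderiv.comp hslice hmaps).clm_apply continuousOn_const)
    (continuousOn_const.add (hK.comp_continuousOn (h.contDiffOn.continuousOn.comp hslice hmaps)))
    Ioo_subset_Icc_self ?_ hη
  rw [closure_Ioo zero_ne_one]

theorem hasDerivWithinAt_characteristic (h : IsQSol K Φ ⊤ Qinit Q N) (hK : Continuous K)
    {x s : ℝ} (hs : 0 ≤ s) (hx : x + s ∈ Icc (0 : ℝ) 1) :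
    HasDerivWithinAt (fun t => Q t (x + t)) (1 / N s + K (Q s (x + s)))
      {t | 0 ≤ t ∧ x + t ∈ Icc (0 : ℝ) 1} s := by
  rw [← h.fderivWithin_characteristic hK hs hx]
  exact (h.hasFDerivWithinAt hs hx).comp_hasDerivWithinAt s
    ((hasDerivWithinAt_id s _).prodMk ((hasDerivWithinAt_id s _).const_add x)) fun _ ht => ht

theorem one_right (h : IsQSol K Φ ⊤ Qinit Q N) (hK : LipschitzWith L K) (hτ : 0 ≤ τ) :
    Q τ 1 = Φ := by
  have hone : (1 : ℝ) ∈ Icc (0 : ℝ) 1 := right_mem_Icc.2 zero_le_one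
  refine eq_const_of_hasDerivWithinAt_sub (y := fun t => Q t 1) hK (fun t ht => ?_)
    ((h.init 1 hone).trans h.init1) hτ
  have hderiv := (h.hasDerivWithinAt_tau ht hone).differentiableWithinAt.hasDerivWithinAt
  refine hderiv.congr_deriv ?_
  have hpde := h.fderivWithin_characteristic_eq_pdTau_add_pdEta ht hone
  rw [h.fderivWithin_characteristic hK.continuous ht hone, h.Ndef t (Ico0_top ▸ ht)] at hpde
  rw [pdTau] at hpde
  linarith

theorem mem_Icc (h : IsQSol K Φ ⊤ Qinit Q N) (hK : LipschitzWith L K) (hτ : 0 ≤ τ)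
    (hη : η ∈ Icc (0 : ℝ) 1) : Q τ η ∈ Icc 0 Φ := by
  have hmono := h.mono τ (Ico0_top ▸ hτ)
  have hzero := hmono (left_mem_Icc.2 zero_le_one) hη hη.1
  have hone := hmono hη (right_mem_Icc.2 zero_le_one) hη.2
  rw [h.bc τ (Ico0_top ▸ hτ)] at hzero
  rw [h.one_right hK hτ] at hone
  exact ⟨hzero, hone⟩

theorem congr (h : IsQSol K Φ ⊤ Qinit Q N) (hK : LipschitzWith L K)
    (hKK' : EqOn K K' (Icc 0 Φ)) : IsQSol K' Φ ⊤ Qinit Q N := by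
  have hΦ : K Φ = K' Φ := hKK' <| by
    have hone := h.mem_Icc hK le_rfl (right_mem_Icc.2 zero_le_one)
    rwa [h.one_right hK le_rfl] at hone
  exact { h with
    initDeriv := hΦ ▸ h.initDeriv
    pde := fun τ hτ η hη => by
      rw [h.pde τ hτ η hη, hKK' (h.mem_Icc hK hτ.1 (Ioo_subset_Icc_self hη))]
    Ndef := fun τ hτ => hΦ ▸ h.Ndef τ hτ
    constraint := fun τ hτ => hΦ ▸ h.constraint τ hτ }

/-- The nonlocal inputs `1 / Nᵢ` only enter through the primitive `M` of their difference: along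
the characteristic through `(τ, η)`, the difference `Q₁ - Q₂ - M` grows at rate at most `L * W`. -/
theorem abs_sub_sub_primitive_le (h₁ : IsQSol K Φ ⊤ Qinit Q₁ N₁) (h₂ : IsQSol K Φ ⊤ Qinit Q₂ N₂)
    (hK : LipschitzWith L K)
    (hM : ∀ s, 0 ≤ s → HasDerivWithinAt M (1 / N₁ s - 1 / N₂ s) (Ici 0) s) (ht₀ : 0 ≤ t₀)
    (heq : EqOn (Q₁ t₀) (Q₂ t₀) (Icc 0 1))
    (hW : ∀ s ∈ Icc t₀ (t₀ + δ), ∀ x ∈ Icc (0 : ℝ) 1, |Q₁ s x - Q₂ s x| ≤ W)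
    (hτ : τ ∈ Icc t₀ (t₀ + δ)) (hη : η ∈ Icc (0 : ℝ) 1) :
    |Q₁ τ η - Q₂ τ η - (M τ - M (max t₀ (τ - η)))| ≤ L * W * δ := by
  set s₀ := max t₀ (τ - η) with hs₀
  have hle : t₀ ≤ s₀ ∧ τ - η ≤ s₀ ∧ s₀ ≤ τ :=
    ⟨le_max_left _ _, le_max_right _ _, max_le hτ.1 (by linarith [hη.1])⟩
  have hchar : ∀ s ∈ Icc s₀ τ, 0 ≤ s ∧ η - τ + s ∈ Icc (0 : ℝ) 1 := fun s hs =>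
    ⟨by linarith [hs.1], by linarith [hs.1], by linarith [hs.2, hη.2]⟩
  have hderiv : ∀ s ∈ Icc s₀ τ, HasDerivWithinAt
      (fun t => Q₁ t (η - τ + t) - Q₂ t (η - τ + t) - M t)
      (K (Q₁ s (η - τ + s)) - K (Q₂ s (η - τ + s))) (Icc s₀ τ) s := fun s hs =>
    ((((h₁.hasDerivWithinAt_characteristic hK.continuous (hchar s hs).1 (hchar s hs).2).sub
      (h₂.hasDerivWithinAt_characteristic hK.continuous (hchar s hs).1 (hchar s hs).2)).mono
        hchar).sub ((hM s (hchar s hs).1).mono fun t ht => (hchar t ht).1)).congr_deriv (by ring)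
  have hbound : ∀ s ∈ Icc s₀ τ, ‖K (Q₁ s (η - τ + s)) - K (Q₂ s (η - τ + s))‖ ≤ L * W :=
    fun s hs => (hK.norm_sub_le _ _).trans (mul_le_mul_of_nonneg_left
      (hW s ⟨hle.1.trans hs.1, hs.2.trans hτ.2⟩ _ (hchar s hs).2) L.2)
  have hstart : Q₁ s₀ (η - τ + s₀) = Q₂ s₀ (η - τ + s₀) := by
    rcases le_total t₀ (τ - η) with hentry | hinitial
    · have hnonneg : s₀ ∈ Ico0 ⊤ := Ico0_top ▸ ht₀.trans hle.1
      rw [show η - τ + s₀ = 0 by rw [hs₀, max_eq_right hentry]; ring, h₁.bc s₀ hnonneg,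
        h₂.bc s₀ hnonneg]
    · rw [hs₀, max_eq_left hinitial] at hchar ⊢
      exact heq (hchar t₀ ⟨le_rfl, hτ.1⟩).2
  have hmain := (convex_Icc s₀ τ).norm_image_sub_le_of_norm_hasDerivWithin_le hderiv hbound
    (left_mem_Icc.2 hle.2.2) (right_mem_Icc.2 hle.2.2)
  rw [hstart, sub_add_cancel, Real.norm_eq_abs, Real.norm_eq_abs,
    abs_of_nonneg (sub_nonneg.2 hle.2.2)] at hmain
  have hWnonneg : 0 ≤ W := (abs_nonneg _).trans (hW τ hτ η hη)
  calc _ = |Q₁ τ η - Q₂ τ η - M τ - (Q₂ s₀ (η - τ + s₀) - Q₂ s₀ (η - τ + s₀) - M s₀)| := by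
        congr 1; ring
    _ ≤ L * W * (τ - s₀) := hmain
    _ ≤ L * W * δ := by gcongr; linarith [hτ.2]

/-- The value `Qᵢ = Φ` at `η = 1` controls the increments of `M` by `L * W * δ`, so that
`W ≤ 3 * (L * W * δ)`. -/
theorem eqOn_step (h₁ : IsQSol K Φ ⊤ Qinit Q₁ N₁) (h₂ : IsQSol K Φ ⊤ Qinit Q₂ N₂)
    (hK : LipschitzWith L K) (hδ : 0 < δ) (hδ₁ : δ ≤ 1) (hLδ : 3 * (L * δ) < 1) (ht₀ : 0 ≤ t₀)
    (heq : EqOn (Q₁ t₀) (Q₂ t₀) (Icc 0 1)) (hτ : τ ∈ Icc t₀ (t₀ + δ)) :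
    EqOn (Q₁ τ) (Q₂ τ) (Icc 0 1) := by
  obtain ⟨M, hM⟩ := exists_hasDerivWithinAt_Ici
    (h₁.continuousOn_one_div.sub h₂.continuousOn_one_div)
  have hsub : Icc t₀ (t₀ + δ) ×ˢ Icc (0 : ℝ) 1 ⊆ Ici 0 ×ˢ Icc 0 1 :=
    prod_mono (fun s hs => ht₀.trans hs.1) le_rfl
  obtain ⟨⟨s, x⟩, ⟨hs, hx⟩, hmax⟩ := (isCompact_Icc.prod isCompact_Icc).exists_isMaxOn
    ⟨(t₀, 0), left_mem_Icc.2 (by linarith), left_mem_Icc.2 zero_le_one⟩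
    ((h₁.contDiffOn.continuousOn.sub h₂.contDiffOn.continuousOn).abs.mono hsub)
  set W := |Q₁ s x - Q₂ s x|
  have hbound : ∀ s ∈ Icc t₀ (t₀ + δ), ∀ x ∈ Icc (0 : ℝ) 1, |Q₁ s x - Q₂ s x| ≤ W :=
    fun s hs x hx => hmax (show (s, x) ∈ _ from ⟨hs, hx⟩)
  have hinput : ∀ t ∈ Icc t₀ (t₀ + δ), |M t - M t₀| ≤ L * W * δ := fun t ht => by
    have h := h₁.abs_sub_sub_primitive_le h₂ hK hM ht₀ heq hbound ht (right_mem_Icc.2 zero_le_one)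
    rwa [h₁.one_right hK (ht₀.trans ht.1), h₂.one_right hK (ht₀.trans ht.1), sub_self, zero_sub,
      abs_neg, max_eq_left (by linarith [ht.2])] at h
  have hphase := h₁.abs_sub_sub_primitive_le h₂ hK hM ht₀ heq hbound hs hx
  have hend := hinput s hs
  have hstart := hinput (max t₀ (s - x))
    ⟨le_max_left _ _, max_le (by linarith) (by linarith [hs.2, hx.1])⟩
  have hWle : W ≤ 3 * (L * W * δ) := by
    rw [abs_le] at hphase hend hstart
    exact abs_le.2 ⟨by linarith, by linarith⟩
  have hWzero : W ≤ 0 := by nlinarith [(abs_nonneg _ : 0 ≤ W)]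
  exact fun y hy => sub_eq_zero.1 (abs_nonpos_iff.1 ((hbound τ hτ y hy).trans hWzero))

theorem eqOn (h₁ : IsQSol K Φ ⊤ Qinit Q₁ N₁) (h₂ : IsQSol K Φ ⊤ Qinit Q₂ N₂)
    (hK : LipschitzWith L K) (hτ : 0 ≤ τ) : EqOn (Q₁ τ) (Q₂ τ) (Icc 0 1) := by
  refine forall_nonneg_of_step (p := fun t => EqOn (Q₁ t) (Q₂ t) (Icc 0 1))
    (δ := 1 / (3 * L + 1)) (by positivity) (fun x hx => (h₁.init x hx).trans (h₂.init x hx).symm)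
    (fun t₀ ht₀ heq t ht => h₁.eqOn_step h₂ hK (by positivity) ?_ ?_ ht₀ heq ht) hτ
  · exact div_le_one_of_le₀ (by linarith [L.2]) (by positivity)
  · rw [← mul_assoc, mul_one_div, div_lt_one (by positivity)]
    linarith

theorem pdEta_eq (h₁ : IsQSol K Φ ⊤ Qinit Q₁ N₁) (h₂ : IsQSol K Φ ⊤ Qinit Q₂ N₂)
    (hK : LipschitzWith L K) (hτ : 0 ≤ τ) (hη : η ∈ Icc (0 : ℝ) 1) :
    pdEta Q₁ τ η = pdEta Q₂ τ η :=
  derivWithin_congr (h₁.eqOn h₂ hK hτ) (h₁.eqOn h₂ hK hτ hη)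

theorem activity_eq (h₁ : IsQSol K Φ ⊤ Qinit Q₁ N₁) (h₂ : IsQSol K Φ ⊤ Qinit Q₂ N₂)
    (hK : LipschitzWith L K) (hτ : 0 ≤ τ) : N₁ τ = N₂ τ := by
  have hinv := (h₁.Ndef τ (Ico0_top ▸ hτ)).trans
    (congrArg (· - K Φ) (h₁.pdEta_eq h₂ hK hτ (right_mem_Icc.2 zero_le_one)))
  rw [← h₂.Ndef τ (Ico0_top ▸ hτ)] at hinv
  simpa using hinv

end IsQSol

/-! ### Steady states -/

theorem surjective_of_hasDerivAt_ge {T T' : ℝ → ℝ} {c : ℝ} (hT : ∀ x, HasDerivAt T (T' x) x)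
    (hc : 0 < c) (hge : ∀ x, c ≤ T' x) : Function.Surjective T := by
  have hmono : Monotone fun x => T x - c * x := monotone_of_hasDerivAt_nonneg
    (fun x => (hT x).sub ((hasDerivAt_id x).const_mul c)) fun x => by
      simpa using hge x
  have hcont : Continuous T := continuous_iff_continuousAt.2 fun x => (hT x).continuousAt
  refine hcont.surjective ?_ ?_
  · refine tendsto_atTop_mono' _ ?_ (tendsto_atTop_add_const_right _ (T 0)
      (tendsto_id.const_mul_atTop hc))
    filter_upwards [eventually_ge_atTop 0] with x hx
    have := hmono hx
    simp only [mul_zero, sub_zero] at this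
    simp only [id_eq]
    linarith
  · refine tendsto_atBot_mono' _ ?_ (tendsto_atBot_add_const_right _ (T 0)
      (tendsto_id.const_mul_atBot hc))
    filter_upwards [eventually_le_atBot 0] with x hx
    have := hmono hx
    simp only [mul_zero, sub_zero] at this
    simp only [id_eq]
    linarith

/-- Separation of variables: the solution inverts the travel time `φ ↦ ∫₀^φ 1 / g`. -/
theorem exists_hasDerivAt_autonomous {g : ℝ → ℝ} {B : ℝ} (hg : Continuous g)
    (hpos : ∀ φ, 0 < g φ) (hB : ∀ φ, g φ ≤ B) :
    ∃ Q : ℝ → ℝ, (∀ x, HasDerivAt Q (g (Q x)) x) ∧ ∀ φ, Q (∫ y in (0 : ℝ)..φ, 1 / g y) = φ := by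
  set T : ℝ → ℝ := fun φ => ∫ y in (0 : ℝ)..φ, 1 / g y
  have hderiv : ∀ φ, HasDerivAt T (1 / g φ) φ := fun φ =>
    ((continuous_const.div hg fun φ => (hpos φ).ne').integral_hasStrictDerivAt 0 φ).hasDerivAt
  have hmono : StrictMono T := strictMono_of_hasDerivAt_pos hderiv fun φ => one_div_pos.2 (hpos φ)
  have hsurj : Function.Surjective T := surjective_of_hasDerivAt_ge hderiv
    (one_div_pos.2 ((hpos 0).trans_le (hB 0))) fun φ => one_div_le_one_div_of_le (hpos φ) (hB φ)
  set e := hmono.orderIsoOfSurjective T hsurj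
  refine ⟨e.symm, fun x => ?_, fun φ => e.symm_apply_apply φ⟩
  have h := HasDerivAt.of_local_left_inverse (f := T) e.symm.continuous.continuousAt
    (hderiv (e.symm x)) (one_div_pos.2 (hpos _)).ne' (.of_forall e.apply_symm_apply)
  rwa [one_div, inv_inv] at h

theorem exists_integral_one_div_add_eq_one {g : ℝ → ℝ} {Φ : ℝ} (hΦ : 0 < Φ) (hg : Continuous g)
    (hpos : ∀ φ, 0 < g φ) (hint : 1 < ∫ φ in (0 : ℝ)..Φ, 1 / g φ) :
    ∃ ν > 0, ∫ φ in (0 : ℝ)..Φ, 1 / (g φ + ν) = 1 := by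
  have hden : ∀ ν φ, 0 < g φ + max ν 0 := fun ν φ =>
    add_pos_of_pos_of_nonneg (hpos φ) (le_max_right _ _)
  set I : ℝ → ℝ := fun ν => ∫ φ in (0 : ℝ)..Φ, 1 / (g φ + max ν 0) with hI
  have hcont : Continuous I :=
    intervalIntegral.continuous_parametric_intervalIntegral_of_continuous'
      (f := fun ν φ => 1 / (g φ + max ν 0))
      (.div continuous_const (by fun_prop : Continuous fun z : ℝ × ℝ => g z.2 + max z.1 0)
        fun z => (hden z.1 z.2).ne') 0 Φ
  have hzero : 1 < I 0 := by simpa [hI] using hint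
  have hΦle : I Φ ≤ 1 := by
    calc I Φ ≤ ∫ _ in (0 : ℝ)..Φ, 1 / Φ := by
          refine intervalIntegral.integral_mono_on hΦ.le (Continuous.intervalIntegrable
            (continuous_const.div (by fun_prop) fun φ => (hden Φ φ).ne') _ _)
            intervalIntegrable_const fun φ _ => ?_
          exact one_div_le_one_div_of_le hΦ (by linarith [hpos φ, le_max_left Φ 0])
      _ = 1 := by simp [hΦ.ne']
  obtain ⟨ν, hν, hIν⟩ := intermediate_value_Icc' hΦ.le hcont.continuousOn ⟨hΦle, hzero.le⟩
  have hνpos : 0 < ν := hν.1.lt_of_ne fun h => by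
    rw [← h] at hIν
    exact hzero.ne' hIν
  exact ⟨ν, hνpos, by simpa only [hI, max_eq_left hνpos.le] using hIν⟩

theorem exists_isSteadyState {K : ℝ → ℝ} {Φ : ℝ} (hΦ : 0 < Φ) (hK : Continuous K)
    (hpos : ∀ φ ∈ Icc 0 Φ, 0 < K φ) (hint : 1 < ∫ φ in (0 : ℝ)..Φ, 1 / K φ) :
    ∃ Qs Ns, IsSteadyState K Φ Qs Ns := by
  set g : ℝ → ℝ := fun φ => K (projIcc 0 Φ hΦ.le φ) with hgdef
  have hg : Continuous g := hK.comp (continuous_subtype_val.comp continuous_projIcc)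
  have hgK : EqOn g K (Icc 0 Φ) := fun φ hφ => by simp only [hgdef, projIcc_of_mem hΦ.le hφ]
  have hgpos : ∀ φ, 0 < g φ := fun φ => hpos _ (projIcc 0 Φ hΦ.le φ).2
  obtain ⟨B, hB⟩ := (isCompact_Icc (a := 0) (b := Φ)).bddAbove_image hK.continuousOn
  have hgint : 1 < ∫ φ in (0 : ℝ)..Φ, 1 / g φ := by
    rwa [intervalIntegral.integral_congr fun φ hφ => by
      rw [hgK (uIcc_of_le hΦ.le ▸ hφ)]]
  obtain ⟨ν, hν, hone⟩ := exists_integral_one_div_add_eq_one hΦ hg hgpos hgint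
  obtain ⟨Q, hQ, hinv⟩ := exists_hasDerivAt_autonomous (g := fun φ => g φ + ν) (B := B + ν)
    (by fun_prop) (fun φ => by linarith [hgpos φ])
    (fun φ => by linarith [hB ⟨_, (projIcc 0 Φ hΦ.le φ).2, rfl⟩])
  have hQzero : Q 0 = 0 := by simpa using hinv 0
  have hQone : Q 1 = Φ := hone ▸ hinv Φ
  have hQmono : Monotone Q := monotone_of_hasDerivAt_nonneg hQ fun x => by
    simpa using (add_pos (hgpos (Q x)) hν).le
  have hQcont : Continuous Q := continuous_iff_continuousAt.2 fun x => (hQ x).continuousAt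
  have hderiv : ∀ η ∈ Icc (0 : ℝ) 1, derivWithin Q (Icc 0 1) η = K (Q η) + 1 / (1 / ν) :=
    fun η hη => by
      rw [one_div_one_div, ← hgK ⟨hQzero ▸ hQmono hη.1, hQone ▸ hQmono hη.2⟩]
      exact (hQ η).hasDerivWithinAt.derivWithin (uniqueDiffOn_Icc zero_lt_one η hη)
  refine ⟨Q, 1 / ν, ContDiff.contDiffOn ?_, one_div_pos.2 hν, hderiv, hQzero, hQone⟩
  rw [contDiff_one_iff_deriv]
  refine ⟨fun x => (hQ x).differentiableAt, ?_⟩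
  rw [show deriv Q = fun x => g (Q x) + ν from funext fun x => (hQ x).deriv]
  fun_prop

theorem nonneg_of_hasDerivWithinAt_pos_of_eq_zero {y y' : ℝ → ℝ} {a b x : ℝ}
    (hy : ∀ x ∈ Icc a b, HasDerivWithinAt y (y' x) (Icc a b) x) (ha : 0 ≤ y a)
    (hpos : ∀ x ∈ Ico a b, y x = 0 → 0 < y' x) (hx : x ∈ Icc a b) : 0 ≤ y x :=
  image_le_of_deriv_right_lt_deriv_boundary' (f := fun _ => 0) (f' := fun _ => 0) (B := y)
    (B' := y') continuousOn_const (fun t _ => hasDerivWithinAt_const t _ 0) ha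
    (fun t ht => (hy t ht).continuousWithinAt)
    (fun t ht => (hy t (Ico_subset_Icc_self ht)).mono_of_mem_nhdsWithin
      (Icc_mem_nhdsGE_of_mem ht)) (fun t ht h => hpos t ht h.symm) hx

namespace IsSteadyState

variable {K Qs : ℝ → ℝ} {Φ Ns η : ℝ}

theorem contDiffOn (h : IsSteadyState K Φ Qs Ns) : ContDiffOn ℝ 1 Qs (Icc 0 1) := h.1

theorem pos (h : IsSteadyState K Φ Qs Ns) : 0 < Ns := h.2.1

theorem derivWithin_eq (h : IsSteadyState K Φ Qs Ns) (hη : η ∈ Icc (0 : ℝ) 1) :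
    derivWithin Qs (Icc 0 1) η = K (Qs η) + 1 / Ns := h.2.2.1 η hη

theorem zero (h : IsSteadyState K Φ Qs Ns) : Qs 0 = 0 := h.2.2.2.1

theorem one (h : IsSteadyState K Φ Qs Ns) : Qs 1 = Φ := h.2.2.2.2

theorem hasDerivWithinAt (h : IsSteadyState K Φ Qs Ns) (hη : η ∈ Icc (0 : ℝ) 1) :
    HasDerivWithinAt Qs (K (Qs η) + 1 / Ns) (Icc 0 1) η :=
  h.derivWithin_eq hη ▸ (h.contDiffOn.differentiableOn one_ne_zero η hη).hasDerivWithinAt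

theorem mem_Icc (h : IsSteadyState K Φ Qs Ns) (hK₀ : 0 < K 0) (hKΦ : 0 < K Φ)
    (hη : η ∈ Icc (0 : ℝ) 1) : Qs η ∈ Icc 0 Φ := by
  have hinput : 0 < 1 / Ns := one_div_pos.2 h.pos
  refine ⟨nonneg_of_hasDerivWithinAt_pos_of_eq_zero (fun x hx => h.hasDerivWithinAt hx)
    h.zero.ge (fun x _ hx => by rw [hx]; positivity) hη, ?_⟩
  have hflip : ∀ x ∈ Icc (0 : ℝ) 1, 1 - x ∈ Icc (0 : ℝ) 1 := fun x hx =>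
    ⟨by linarith [hx.2], by linarith [hx.1]⟩
  have hreversed : ∀ x ∈ Icc (0 : ℝ) 1, HasDerivWithinAt (fun x => Φ - Qs (1 - x))
      (K (Qs (1 - x)) + 1 / Ns) (Icc 0 1) x := fun x hx =>
    (((h.hasDerivWithinAt (hflip x hx)).scomp x ((hasDerivWithinAt_id x _).const_sub 1)
      hflip).const_sub Φ).congr_deriv (by simp)
  have hle := nonneg_of_hasDerivWithinAt_pos_of_eq_zero hreversed (by simp [h.one])
    (fun x _ hx => by rw [← sub_eq_zero.1 hx]; positivity) (hflip η hη)
  rw [sub_sub_cancel] at hle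
  exact sub_nonneg.1 hle

theorem hinit_pos (h : IsSteadyState K Φ Qs Ns) (hη : η ∈ Icc (0 : ℝ) 1) : 0 < Hinit K Qs η := by
  rw [Hinit, h.derivWithin_eq hη, add_sub_cancel_left]
  exact one_div_pos.2 h.pos

theorem a2 (h : IsSteadyState K Φ Qs Ns) (hpos : ∀ φ ∈ Icc 0 Φ, 0 < K φ) (hΦ : 0 ≤ Φ) :
    A2 K Φ Qs where
  reg := h.contDiffOn
  mono := by
    refine monotoneOn_of_deriv_nonneg (convex_Icc 0 1) h.contDiffOn.continuousOn
      (fun x hx => ((h.hasDerivWithinAt (interior_subset hx)).mono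
        interior_subset).differentiableWithinAt) fun x hx => ?_
    have hx' := interior_subset hx
    rw [((h.hasDerivWithinAt hx').hasDerivAt (mem_interior_iff_mem_nhds.1 hx)).deriv]
    have hmem := h.mem_Icc (hpos 0 (left_mem_Icc.2 hΦ)) (hpos Φ (right_mem_Icc.2 hΦ)) hx'
    exact add_nonneg (hpos _ hmem).le (one_div_pos.2 h.pos).le
  init0 := h.zero
  init1 := h.one
  deriv1 := by
    rw [h.derivWithin_eq (right_mem_Icc.2 zero_le_one), h.one]
    exact lt_add_of_pos_right _ (one_div_pos.2 h.pos)
  compat := by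
    rw [h.derivWithin_eq (right_mem_Icc.2 zero_le_one),
      h.derivWithin_eq (left_mem_Icc.2 zero_le_one), h.one, h.zero]
    ring

theorem isQSol (h : IsSteadyState K Φ Qs Ns) (hA2 : A2 K Φ Qs) :
    IsQSol K Φ ⊤ Qs (fun _ => Qs) fun _ => Ns where
  initReg := hA2.reg
  initMono := hA2.mono
  init0 := hA2.init0
  init1 := hA2.init1
  initDeriv := hA2.deriv1
  reg := hA2.reg.comp contDiff_snd.contDiffOn fun _ hz => hz.2
  mono _ _ := hA2.mono
  Ncont := continuousOn_const
  Npos _ _ := h.pos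
  pde τ _ η hη := by
    have hstationary : pdTau (fun _ => Qs) τ η = 0 := congrFun (derivWithin_const _ _) τ
    rw [hstationary, zero_add]
    exact (h.derivWithin_eq (Ioo_subset_Icc_self hη)).trans (add_comm _ _)
  bc _ _ := hA2.init0
  Ndef _ _ := by
    simp only [pdEta]
    rw [h.derivWithin_eq (right_mem_Icc.2 zero_le_one), h.one, add_sub_cancel_left]
  init _ _ := rfl
  constraint _ _ := hA2.deriv1

end IsSteadyState

/-! ### Slope extensions and monotone splittings -/

theorem exists_lipschitzWith_of_abs_deriv_le {F : ℝ → ℝ} (hF : Differentiable ℝ F)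
    (hbdd : ∃ C, ∀ x, |deriv F x| ≤ C) : ∃ L, LipschitzWith L F := by
  obtain ⟨C, hC⟩ := hbdd
  exact ⟨C.toNNReal, lipschitzWith_of_nnnorm_deriv_le hF fun x =>
    NNReal.coe_le_coe.1 ((hC x).trans (Real.le_coe_toNNReal C))⟩

/-- `F` with derivative `k` extends `K` from `[0, Φ]` to a function on `ℝ` whose slopes are all
slopes of `K` on `[0, Φ]`. Bounds on `K'` over `[0, Φ]` become global bounds on `k`. -/
structure IsSlopeExtension (Φ : ℝ) (K F k : ℝ → ℝ) : Prop where
  eqOn : EqOn F K (Icc 0 Φ)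
  hasDerivAt : ∀ x, HasDerivAt F (k x) x
  eqOn_deriv : EqOn k (deriv K) (Icc 0 Φ)
  mem_image : ∀ x, k x ∈ deriv K '' Icc 0 Φ
  lipschitz : ∃ L, LipschitzWith L F
  lipschitz_deriv : ∃ L, LipschitzWith L k

namespace KAssump

variable {K : ℝ → ℝ} {Φ : ℝ}

theorem contDiff_deriv (hK : KAssump K Φ) : ContDiff ℝ 1 (deriv K) :=
  (contDiff_succ_iff_deriv.1 (one_add_one_eq_two (R := WithTop ℕ∞) ▸ hK.smooth)).2.2

theorem continuous_deriv_deriv (hK : KAssump K Φ) : Continuous (deriv (deriv K)) :=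
  hK.contDiff_deriv.continuous_deriv le_rfl

theorem exists_lipschitzWith (hK : KAssump K Φ) : ∃ L, LipschitzWith L K :=
  exists_lipschitzWith_of_abs_deriv_le (hK.smooth.differentiable two_ne_zero) hK.bdd1

theorem exists_isSlopeExtension (hK : KAssump K Φ) (hΦ : 0 ≤ Φ) :
    ∃ F k, IsSlopeExtension Φ K F k := by
  set k : ℝ → ℝ := fun x => deriv K (projIcc 0 Φ hΦ x) with hkdef
  have hmem : ∀ x, k x ∈ deriv K '' Icc 0 Φ := fun x => mem_image_of_mem _ (projIcc 0 Φ hΦ x).2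
  have heq : EqOn k (deriv K) (Icc 0 Φ) := fun x hx => by
    simp only [hkdef, projIcc_of_mem hΦ hx]
  obtain ⟨L, hL⟩ := exists_lipschitzWith_of_abs_deriv_le
    (hK.contDiff_deriv.differentiable one_ne_zero) hK.bdd2
  have hk : LipschitzWith (L * 1) k := hL.comp (LipschitzWith.projIcc hΦ)
  set F : ℝ → ℝ := fun x => K 0 + ∫ y in (0 : ℝ)..x, k y with hFdef
  have hF : ∀ x, HasDerivAt F (k x) x := fun x =>
    (hk.continuous.integral_hasStrictDerivAt 0 x).hasDerivAt.const_add (K 0)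
  refine ⟨F, k, fun x hx => ?_, hF, heq, hmem, ?_, _, hk⟩
  · have h := intervalIntegral.integral_eq_sub_of_hasDerivAt (a := 0) (b := x) (f := K) (f' := k)
      (fun y hy => by
        rw [uIcc_of_le hx.1] at hy
        rw [heq ⟨hy.1, hy.2.trans hx.2⟩]
        exact (hK.smooth.differentiable two_ne_zero y).hasDerivAt)
      (hk.continuous.intervalIntegrable _ _)
    simp only [hFdef, h, add_sub_cancel]
  · obtain ⟨C, hC⟩ := hK.bdd1
    exact exists_lipschitzWith_of_abs_deriv_le (fun x => (hF x).differentiableAt)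
      ⟨C, fun x => (hF x).deriv ▸ hC _⟩

/-- `α(φ) = ∫_φ^Φ (K'')⁺` and `β(φ) = ∫_0^φ (K'')⁻`. -/
theorem exists_isMonotoneSplitting (hK : KAssump K Φ) :
    ∃ α β, IsMonotoneSplitting Φ (kmax K Φ) (deriv K) α β := by
  set A : ℝ → ℝ := fun φ => ∫ x in (0 : ℝ)..φ, max (deriv (deriv K) x) 0 with hA
  set B : ℝ → ℝ := fun φ => ∫ x in (0 : ℝ)..φ, max (-deriv (deriv K) x) 0 with hB
  have hKcont := hK.continuous_deriv_deriv
  have hposcont : Continuous fun x => max (deriv (deriv K) x) 0 := by fun_prop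
  have hnegcont : Continuous fun x => max (-deriv (deriv K) x) 0 := by fun_prop
  have hAderiv : ∀ φ, HasDerivAt A (max (deriv (deriv K) φ) 0) φ := fun φ =>
    (hposcont.integral_hasStrictDerivAt 0 φ).hasDerivAt
  have hBderiv : ∀ φ, HasDerivAt B (max (-deriv (deriv K) φ) 0) φ := fun φ =>
    (hnegcont.integral_hasStrictDerivAt 0 φ).hasDerivAt
  have hAmono : Monotone A := monotone_of_hasDerivAt_nonneg hAderiv fun _ => le_max_right _ _
  have hBmono : Monotone B := monotone_of_hasDerivAt_nonneg hBderiv fun _ => le_max_right _ _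
  have hsub : ∀ φ, deriv K φ - deriv K 0 = A φ - B φ := fun φ => by
    rw [← intervalIntegral.integral_eq_sub_of_hasDerivAt (fun x _ =>
      (hK.contDiff_deriv.differentiable one_ne_zero x).hasDerivAt)
      (hKcont.intervalIntegrable 0 φ), hA, hB, ← intervalIntegral.integral_sub
      (hposcont.intervalIntegrable _ _) (hnegcont.intervalIntegrable _ _)]
    exact intervalIntegral.integral_congr fun x _ => (max_zero_sub_max_neg_zero_eq_self _).symm
  have hBzero : B 0 = 0 := intervalIntegral.integral_same
  refine ⟨fun φ => A Φ - A φ, B, ⟨?_, ?_, fun φ _ => ?_, fun φ hφ => sub_nonneg.2 (hAmono hφ.2),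
    fun φ hφ => hBzero ▸ hBmono hφ.1, fun _ _ _ _ h => sub_le_sub_left (hAmono h) _,
    hBmono.monotoneOn _⟩⟩
  · exact continuous_const.sub (continuous_iff_continuousAt.2 fun φ => (hAderiv φ).continuousAt)
  · exact continuous_iff_continuousAt.2 fun φ => (hBderiv φ).continuousAt
  · have hkmax : kmax K Φ = deriv K 0 + A Φ := rfl
    linarith [hsub φ]

end KAssump

/-! ### Contraction of classical solutions -/

namespace A2

variable {K F k Qinit : ℝ → ℝ} {Φ κ : ℝ} {f f' : ℝ → ℝ → ℝ} {L : NNReal}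

theorem threshold_nonneg (h : A2 K Φ Qinit) : 0 ≤ Φ :=
  h.init0 ▸ h.init1 ▸ h.mono (left_mem_Icc.2 zero_le_one) (right_mem_Icc.2 zero_le_one) zero_le_one

theorem congr (h : A2 K Φ Qinit) (hF : EqOn F K (Icc 0 Φ)) : A2 F Φ Qinit where
  reg := h.reg
  mono := h.mono
  init0 := h.init0
  init1 := h.init1
  deriv1 := by
    rw [hF (right_mem_Icc.2 h.threshold_nonneg)]
    exact h.deriv1
  compat := by
    rw [hF (right_mem_Icc.2 h.threshold_nonneg), hF (left_mem_Icc.2 h.threshold_nonneg)]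
    exact h.compat

theorem continuousOn_derivWithin (h : A2 K Φ Qinit) :
    ContinuousOn (derivWithin Qinit (Icc 0 1)) (Icc 0 1) :=
  h.reg.continuousOn_derivWithin (uniqueDiffOn_Icc zero_lt_one) le_rfl

theorem exists_isTransportDensity (h : A2 K Φ Qinit) (hK : ∀ x, HasDerivAt K (k x) x)
    (hk : LipschitzWith L k) (hκ : κ < 0) (hkκ : ∀ x, k x ≤ κ) :
    ∃ f f', IsTransportDensity k (K 0 - K Φ) f f' ∧
      ∀ η ∈ Icc (0 : ℝ) 1, f 0 (-η) = derivWithin Qinit (Icc 0 1) η := by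
  set v : ℝ → ℝ := fun x => derivWithin Qinit (Icc 0 1) (projIcc 0 1 zero_le_one x) with hvdef
  have hveq : ∀ η ∈ Icc (0 : ℝ) 1, v η = derivWithin Qinit (Icc 0 1) η := fun η hη => by
    simp only [hvdef, projIcc_of_mem zero_le_one hη]
  have hv : Continuous v := h.continuousOn_derivWithin.comp_continuous
    (continuous_subtype_val.comp continuous_projIcc) fun x => (projIcc 0 1 zero_le_one x).2
  obtain ⟨V, hV⟩ := isCompact_Icc.bddAbove_image h.continuousOn_derivWithin
  have hvV : ∀ x, v x ∈ Icc 0 V := fun x =>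
    ⟨h.mono.derivWithin_nonneg, hV (mem_image_of_mem _ (projIcc 0 1 zero_le_one x).2)⟩
  have hanti : Antitone K := antitone_of_hasDerivAt_nonpos hK fun x => (hkκ x).trans hκ.le
  have hcompat : v 1 + (K 0 - K Φ) = v 0 := by
    rw [hveq 1 (right_mem_Icc.2 zero_le_one), hveq 0 (left_mem_Icc.2 zero_le_one)]
    linarith [h.compat]
  obtain ⟨f, f', hf, hinit⟩ := _root_.exists_isTransportDensity hk hκ hkκ hv hvV
    (sub_nonneg.2 (hanti h.threshold_nonneg)) hcompat
  refine ⟨f, f', hf, fun η hη => ?_⟩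
  rw [hinit (-η) (neg_nonpos.2 hη.1), neg_neg, hveq η hη]

theorem eqOn_phase_zero (h : A2 K Φ Qinit)
    (hinit : ∀ η ∈ Icc (0 : ℝ) 1, f 0 (-η) = derivWithin Qinit (Icc 0 1) η) :
    EqOn (phase f 0) Qinit (Icc 0 1) := fun η hη => by
  calc phase f 0 η = ∫ x in (0 : ℝ)..η, derivWithin Qinit (Icc 0 1) x := by
        rw [phase_eq_integral]
        refine intervalIntegral.integral_congr fun x hx => ?_
        rw [uIcc_of_le hη.1] at hx
        simp only [zero_sub, hinit x ⟨hx.1, hx.2.trans hη.2⟩]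
    _ = Qinit η := by rw [integral_derivWithin_eq_sub h.reg hη, h.init0, sub_zero]

theorem exists_isTransportDensity_isQSol (h : A2 K Φ Qinit) (hF : IsSlopeExtension Φ K F k)
    (hκ : κ < 0) (hκK : ∀ φ ∈ Icc 0 Φ, deriv K φ ≤ κ)
    (hH : ∀ η ∈ Icc (0 : ℝ) 1, 0 < Hinit K Qinit η) :
    ∃ f f', IsTransportDensity k (F 0 - F Φ) f f' ∧ (∀ t, 0 ≤ t → phase f t 1 = Φ) ∧
      ∃ N, IsQSol K Φ ⊤ Qinit (phase f) N := by
  obtain ⟨L, hlip⟩ := hF.lipschitz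
  obtain ⟨L', hk⟩ := hF.lipschitz_deriv
  have hkκ : ∀ x, k x ≤ κ := fun x => by
    obtain ⟨φ, hφ, heq⟩ := hF.mem_image x
    exact heq ▸ hκK φ hφ
  have hA2 : A2 F Φ Qinit := h.congr hF.eqOn
  obtain ⟨f, f', hf, hinit⟩ := hA2.exists_isTransportDensity hF.hasDerivAt hk hκ hkκ
  have hphase : EqOn (phase f 0) Qinit (Icc 0 1) := hA2.eqOn_phase_zero hinit
  have hone : ∀ t, 0 ≤ t → phase f t 1 = Φ := fun t ht =>
    hf.phase_one hF.hasDerivAt hk.continuous hlip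
      ((hphase (right_mem_Icc.2 zero_le_one)).trans h.init1) ht
  have hexcess : ∀ η ∈ Icc (0 : ℝ) 1, 0 < f 0 (-η) - F (phase f 0 η) := fun η hη => by
    have hmem : Qinit η ∈ Icc 0 Φ :=
      ⟨h.init0 ▸ h.mono (left_mem_Icc.2 zero_le_one) hη hη.1,
        h.init1 ▸ h.mono hη (right_mem_Icc.2 zero_le_one) hη.2⟩
    rw [hinit η hη, hphase hη, hF.eqOn hmem]
    exact hH η hη
  have hout : ∀ t, 0 ≤ t → 0 < f t (t - 1) - F Φ := fun t ht =>
    hf.outflow_pos hF.hasDerivAt hk.continuous (fun x => (hkκ x).trans hκ.le) hone hexcess ht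
  exact ⟨f, f', hf, hone, _,
    (hf.isQSol hF.hasDerivAt hk.continuous hA2 hphase hout).congr hlip hF.eqOn⟩

end A2

section ClassicalSolutions

variable {K Qinit Qinit' Qs Qs' N N' : ℝ → ℝ} {Φ Ns Ns' τ : ℝ} {Q Q' : ℝ → ℝ → ℝ}

theorem KAssump.deriv_le_kmax (hK : KAssump K Φ) {φ : ℝ} (hφ : φ ∈ Icc 0 Φ) :
    deriv K φ ≤ kmax K Φ := by
  obtain ⟨α, β, hsplit⟩ := hK.exists_isMonotoneSplitting
  exact hsplit.le hφ

theorem exists_isQSol (hK : KAssump K Φ) (hkmax : kmax K Φ < 0) (hA2 : A2 K Φ Qinit)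
    (hH : ∀ η ∈ Icc (0 : ℝ) 1, 0 < Hinit K Qinit η) : ∃ Q N, IsQSol K Φ ⊤ Qinit Q N := by
  obtain ⟨F, k, hF⟩ := hK.exists_isSlopeExtension hA2.threshold_nonneg
  obtain ⟨f, -, -, -, N, hQ⟩ :=
    hA2.exists_isTransportDensity_isQSol hF hkmax (fun _ => hK.deriv_le_kmax) hH
  exact ⟨phase f, N, hQ⟩

theorem IsQSol.integral_abs_pdEta_sub_le (h : IsQSol K Φ ⊤ Qinit Q N)
    (h' : IsQSol K Φ ⊤ Qinit' Q' N') (hK : KAssump K Φ) (hkmax : kmax K Φ < 0)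
    (hA2 : A2 K Φ Qinit) (hA2' : A2 K Φ Qinit')
    (hH : ∀ η ∈ Icc (0 : ℝ) 1, 0 < Hinit K Qinit η)
    (hH' : ∀ η ∈ Icc (0 : ℝ) 1, 0 < Hinit K Qinit' η) (hτ : 0 ≤ τ) :
    ∫ η in (0 : ℝ)..1, |pdEta Q τ η - pdEta Q' τ η| ≤
      exp (kmax K Φ * τ) * ∫ η in (0 : ℝ)..1, |pdEta Q 0 η - pdEta Q' 0 η| := by
  obtain ⟨L, hlip⟩ := hK.exists_lipschitzWith
  obtain ⟨F, k, hF⟩ := hK.exists_isSlopeExtension hA2.threshold_nonneg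
  obtain ⟨α, β, hsplit⟩ := hK.exists_isMonotoneSplitting
  obtain ⟨f, f', hf, hfone, M, hfsol⟩ :=
    hA2.exists_isTransportDensity_isQSol hF hkmax (fun _ => hsplit.le) hH
  obtain ⟨g, g', hg, hgone, M', hgsol⟩ :=
    hA2'.exists_isTransportDensity_isQSol hF hkmax (fun _ => hsplit.le) hH'
  have hdensity : ∀ t, 0 ≤ t → ∫ η in (0 : ℝ)..1, |pdEta Q t η - pdEta Q' t η| =
      ∫ η in (0 : ℝ)..1, |f t (t - η) - g t (t - η)| := fun t ht =>
    intervalIntegral.integral_congr fun η hη => by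
      rw [uIcc_of_le zero_le_one] at hη
      simp only [h.pdEta_eq hfsol hlip ht hη, h'.pdEta_eq hgsol hlip ht hη, hf.pdEta_phase hη,
        hg.pdEta_phase hη]
  rw [hdensity τ hτ, hdensity 0 le_rfl]
  exact hf.integral_abs_sub_le hg hfone hgone (hsplit.congr hF.eqOn_deriv) hkmax.le hτ

theorem IsSteadyState.eqOn (h : IsSteadyState K Φ Qs Ns) (h' : IsSteadyState K Φ Qs' Ns')
    (hK : KAssump K Φ) (hkmax : kmax K Φ < 0) (hΦ : 0 ≤ Φ) : EqOn Qs Qs' (Icc 0 1) := by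
  have hA2 := h.a2 hK.pos hΦ
  have hA2' := h'.a2 hK.pos hΦ
  set D := ∫ η in (0 : ℝ)..1, |derivWithin Qs (Icc 0 1) η - derivWithin Qs' (Icc 0 1) η|
  have hcontract : D ≤ exp (kmax K Φ * 1) * D :=
    (h.isQSol hA2).integral_abs_pdEta_sub_le (h'.isQSol hA2') hK hkmax hA2 hA2'
      (fun _ => h.hinit_pos) (fun _ => h'.hinit_pos) zero_le_one
  have hnonpos : D ≤ 0 := by
    have hexp : exp (kmax K Φ * 1) < 1 := exp_lt_one_iff.2 (by linarith)
    nlinarith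
  intro η hη
  have hle := abs_sub_le_integral_abs_derivWithin_sub h.contDiffOn h'.contDiffOn
    (h.zero.trans h'.zero.symm) hη
  exact sub_eq_zero.1 (abs_nonpos_iff.1 (hle.trans hnonpos))

theorem IsSteadyState.activity_eq (h : IsSteadyState K Φ Qs Ns) (h' : IsSteadyState K Φ Qs' Ns')
    (heq : EqOn Qs Qs' (Icc 0 1)) : Ns = Ns' := by
  have hzero := left_mem_Icc.2 (zero_le_one (α := ℝ))
  have hderiv := derivWithin_congr heq (heq hzero)
  rw [h.derivWithin_eq hzero, h'.derivWithin_eq hzero, heq hzero] at hderiv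
  simpa using hderiv

end ClassicalSolutions

/-- Theorem 5.10: global existence and exponential convergence to the unique steady state
when `k_max < 0` and the interaction is mild. -/
theorem stmt15 (ΦF : ℝ) (hΦF : 0 < ΦF) (K : ℝ → ℝ) (hK : KAssump K ΦF)
    (hkmax : kmax K ΦF < 0)
    (hint : 1 < ∫ φ in (0 : ℝ)..ΦF, 1 / K φ)
    (Qinit : ℝ → ℝ) (hA2 : A2 K ΦF Qinit)
    (hH : ∀ η ∈ Icc (0 : ℝ) 1, 0 < Hinit K Qinit η) :
    ∃ (Q : ℝ → ℝ → ℝ) (N : ℝ → ℝ) (Qs : ℝ → ℝ) (Ns : ℝ),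
      IsQSol K ΦF ⊤ Qinit Q N ∧
      (∀ (Q' : ℝ → ℝ → ℝ) (N' : ℝ → ℝ), IsQSol K ΦF ⊤ Qinit Q' N' →
        (∀ τ : ℝ, 0 ≤ τ → ∀ η ∈ Icc (0 : ℝ) 1, Q' τ η = Q τ η) ∧
        (∀ τ : ℝ, 0 ≤ τ → N' τ = N τ)) ∧
      IsSteadyState K ΦF Qs Ns ∧
      (∀ (Qs' : ℝ → ℝ) (Ns' : ℝ), IsSteadyState K ΦF Qs' Ns' →
        (∀ η ∈ Icc (0 : ℝ) 1, Qs' η = Qs η) ∧ Ns' = Ns) ∧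
      ∀ τ : ℝ, 0 ≤ τ →
        (∫ η in (0 : ℝ)..1, |pdEta Q τ η - derivWithin Qs (Icc 0 1) η|)
          ≤ Real.exp (kmax K ΦF * τ) *
            ∫ η in (0 : ℝ)..1, |pdEta Q 0 η - derivWithin Qs (Icc 0 1) η| := by
  obtain ⟨L, hlip⟩ := hK.exists_lipschitzWith
  obtain ⟨Q, N, hQ⟩ := exists_isQSol hK hkmax hA2 hH
  obtain ⟨Qs, Ns, hs⟩ := exists_isSteadyState hΦF hK.smooth.continuous hK.pos hint
  have hsA2 : A2 K ΦF Qs := hs.a2 hK.pos hΦF.le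
  refine ⟨Q, N, Qs, Ns, hQ, fun Q' N' hQ' => ?_, hs, fun Qs' Ns' hs' => ?_, fun τ hτ => ?_⟩
  · exact ⟨fun τ hτ => hQ'.eqOn hQ hlip hτ, fun τ hτ => hQ'.activity_eq hQ hlip hτ⟩
  · have heq := hs'.eqOn hs hK hkmax hΦF.le
    exact ⟨heq, hs'.activity_eq hs heq⟩
  · exact hQ.integral_abs_pdEta_sub_le (hs.isQSol hsA2) hK hkmax hA2 hsA2 hH
      (fun _ => hs.hinit_pos) hτ
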